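/- Let (E,d_E) be a separable metric space, let p ≥ 1 and let μ ∈ 𝒫_p(E). Let 0 ≤ β < 1/(2p), let 0 < ε < (p²/2)·(1/(2p) − β) and let q = 1/(1/(p+ε) − β). Then limsup_{n→∞} n^β · (𝔼[W_p(μ_n,μ)^p])^{1/p} ≤ (100p²/((1/(2p) − β)·ε)) · limsup_{n→∞} n^β · e_{n,q}(μ), where μ_n is the empirical measure of μ with sample size n. -/

import Mathlib

open MeasureTheory ENNReal Filter

noncomputable section

/-- The `p`-Wasserstein distance between two measures on a metric space, as an
extended nonnegative real: the infimum over all couplings `γ` (measures on `E × E`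
with the prescribed marginals) of `(∫ d(x,y)^p dγ)^(1/p)`. -/
def Wp {E : Type*} [MetricSpace E] [MeasurableSpace E] (p : ℝ) (μ ν : Measure E) : ℝ≥0∞ :=
  ⨅ γ ∈ {γ : Measure (E × E) | γ.map Prod.fst = μ ∧ γ.map Prod.snd = ν},
    (∫⁻ z, edist z.1 z.2 ^ p ∂γ) ^ (1 / p)

/-- The (uniform) discrete measure `(1/n) ∑ δ_{X i}`. -/
def empiricalMeasure {E : Type*} [MeasurableSpace E] (n : ℕ) (X : Fin n → E) : Measure E :=
  (n : ℝ≥0∞)⁻¹ • ∑ i, Measure.dirac (X i)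

/-- The law of `n` independent samples of `μ`. -/
def sampleMeasure {E : Type*} [MeasurableSpace E] (μ : Measure E) (n : ℕ) :
    Measure (Fin n → E) :=
  Measure.pi fun _ => μ

/-- `𝔼[W_p(μ_n, μ)]`, where `μ_n` is the empirical measure of `μ` with sample size `n`. -/
def expWp {E : Type*} [MetricSpace E] [MeasurableSpace E] (p : ℝ) (μ : Measure E) (n : ℕ) :
    ℝ≥0∞ :=
  ∫⁻ X, Wp p (empiricalMeasure n X) μ ∂(sampleMeasure μ n)

/-- `(𝔼[W_p(μ_n, μ)^p])^{1/p}`, where `μ_n` is the empirical measure of `μ` with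
sample size `n`. -/
def expWpPow {E : Type*} [MetricSpace E] [MeasurableSpace E] (p : ℝ) (μ : Measure E) (n : ℕ) :
    ℝ≥0∞ :=
  (∫⁻ X, (Wp p (empiricalMeasure n X) μ) ^ p ∂(sampleMeasure μ n)) ^ (1 / p)

/-- The optimal uniform quantization error
`b_{n,p}(μ) = inf_{x₁,…,x_n} W_p(μ, (1/n) ∑ δ_{x_i})`. -/
def unifQuantErr {E : Type*} [MetricSpace E] [MeasurableSpace E] (p : ℝ) (n : ℕ)
    (μ : Measure E) : ℝ≥0∞ :=
  ⨅ x : Fin n → E, Wp p μ (empiricalMeasure n x)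

/-- The optimal quantization error `e_{n,p}(μ)`: the infimum of `W_p(μ, ν)` over all
probability measures `ν` supported on at most `n` points. -/
def quantErr {E : Type*} [MetricSpace E] [MeasurableSpace E] (p : ℝ) (n : ℕ)
    (μ : Measure E) : ℝ≥0∞ :=
  ⨅ ν ∈ {ν : Measure E | IsProbabilityMeasure ν ∧
      ∃ S : Finset E, S.card ≤ n ∧ ν (↑S : Set E)ᶜ = 0}, Wp p μ ν

/-- `μ` has a finite `p`-th moment: `∫ d(x, x₀)^p dμ(x) < ∞` for some `x₀`. -/
def HasFiniteMoment {E : Type*} [MetricSpace E] [MeasurableSpace E] (p : ℝ)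
    (μ : Measure E) : Prop :=
  ∃ x₀ : E, ∫⁻ x, edist x x₀ ^ p ∂μ ≠ ∞

end


/-!
Choose nearest-point quantizers with about `n / b ^ i` points, `i = 0, …, I`, and compose them. The
cells of the compositions `π i` form nested partitions, and the last one is taken to be trivial.
Composing costs a factor `2` in the distortion, which the growth factor `4` of the distortion
allowed per scale absorbs. Between `μ_n` and `μ` interpolate through the measures whose density with
respect to `μ` is the ratio `G i = μ_n(B) / μ(B)` on each cell `B` of `π i`. Going from `G i` to
`G (i + 1)` only moves the mass `|G i - G (i + 1)|` within the cells of `π (i + 1)`, so the cost is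
controlled by `∫ |G i - G (i + 1)| d(x, π (i + 1) x) ^ p dμ`.

The variance of the binomial law gives `𝔼 |μ_n(B) / μ(B) - 1| ≤ 2 (n μ(B)) ^ (-t)` for `t ≤ 1 / 2`.
With `t = 1 - p / q`, Hölder's inequality and `∫ 1 / μ(cell of x) dμ ≤ #cells` bound the expected
cost of a step by the `L^q` distortion times `(n / b ^ i / n) ^ (1 / p - 1 / q)`. For `b` large
these bounds decay geometrically, because `β < 1 / p - 1 / q`.
-/
section Wasserstein

open ProbabilityTheory

variable {E : Type*} [MeasurableSpace E]

/-- The coupling obtained from `γ` by moving the second coordinate with the kernel `κ`. -/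
noncomputable def transportSnd (γ : Measure (E × E)) (κ : Kernel E E) : Measure (E × E) :=
  (γ ⊗ₘ κ.comap Prod.snd measurable_snd).map fun z => (z.1.1, z.2)

theorem map_fst_transportSnd (γ : Measure (E × E)) [SFinite γ] (κ : Kernel E E)
    [IsMarkovKernel κ] : (transportSnd γ κ).map Prod.fst = γ.map Prod.fst := by
  calc (transportSnd γ κ).map Prod.fst
      = (γ ⊗ₘ κ.comap Prod.snd measurable_snd).fst.map Prod.fst := by
        rw [transportSnd, Measure.fst, Measure.map_map (by fun_prop) (by fun_prop),
          Measure.map_map (by fun_prop) (by fun_prop)]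
        rfl
    _ = γ.map Prod.fst := by rw [Measure.fst_compProd]

theorem map_snd_transportSnd (γ : Measure (E × E)) [SFinite γ] (κ : Kernel E E)
    [IsSFiniteKernel κ] : (transportSnd γ κ).map Prod.snd = (γ.map Prod.snd).bind κ := by
  calc (transportSnd γ κ).map Prod.snd
      = (γ ⊗ₘ κ.comap Prod.snd measurable_snd).snd := by
        rw [transportSnd, Measure.map_map (by fun_prop) (by fun_prop)]
        rfl
    _ = γ.bind (κ.comap Prod.snd measurable_snd) := Measure.snd_compProd _ _
    _ = (γ.map Prod.snd).bind κ := by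
        ext s hs
        rw [Measure.bind_apply hs (Kernel.aemeasurable _),
          Measure.bind_apply hs (Kernel.aemeasurable _),
          lintegral_map (Kernel.measurable_coe κ hs) measurable_snd]
        rfl

variable [MetricSpace E]

theorem Wp_le_of_map_eq {p : ℝ} {μ ν : Measure E} {γ : Measure (E × E)}
    (hfst : γ.map Prod.fst = μ) (hsnd : γ.map Prod.snd = ν) :
    Wp p μ ν ≤ (∫⁻ z, edist z.1 z.2 ^ p ∂γ) ^ (1 / p) :=
  iInf₂_le γ ⟨hfst, hsnd⟩

variable [TopologicalSpace.SeparableSpace E] [OpensMeasurableSpace E] {p : ℝ}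

theorem Wp_self (hp : 0 < p) (μ : Measure E) : Wp p μ μ = 0 := by
  have hdiag : Measurable fun x : E => (x, x) := by fun_prop
  refine le_antisymm ?_ bot_le
  calc Wp p μ μ ≤ (∫⁻ z, edist z.1 z.2 ^ p ∂μ.map fun x => (x, x)) ^ (1 / p) :=
        Wp_le_of_map_eq ((Measure.map_map measurable_fst hdiag).trans Measure.map_id)
          ((Measure.map_map measurable_snd hdiag).trans Measure.map_id)
    _ = 0 := by rw [lintegral_map (by fun_prop) hdiag]; simp [hp]

theorem Wp_bind_le (hp : 1 ≤ p) (α l : Measure E) [IsFiniteMeasure α] (κ : Kernel E E)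
    [IsMarkovKernel κ] :
    Wp p α (l.bind κ) ≤ Wp p α l + (∫⁻ x, ∫⁻ y, edist x y ^ p ∂κ x ∂l) ^ (1 / p) := by
  conv_rhs => simp only [Wp, ENNReal.iInf_add]
  refine le_iInf₂ fun γ hγ => ?_
  obtain ⟨rfl, rfl⟩ := hγ
  have hγ_fin : IsFiniteMeasure γ :=
    Measure.isFiniteMeasure_of_map (f := Prod.fst) (by fun_prop)
  let γ' := γ ⊗ₘ κ.comap Prod.snd measurable_snd
  calc Wp p (γ.map Prod.fst) ((γ.map Prod.snd).bind κ)
      ≤ (∫⁻ z, edist z.1 z.2 ^ p ∂transportSnd γ κ) ^ (1 / p) :=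
        Wp_le_of_map_eq (map_fst_transportSnd γ κ) (map_snd_transportSnd γ κ)
    _ = (∫⁻ z, edist z.1.1 z.2 ^ p ∂γ') ^ (1 / p) := by
        rw [transportSnd, lintegral_map (by fun_prop) (by fun_prop)]
    _ ≤ (∫⁻ z, (edist z.1.1 z.1.2 + edist z.1.2 z.2) ^ p ∂γ') ^ (1 / p) := by
        gcongr
        exact edist_triangle _ _ _
    _ ≤ (∫⁻ z, edist z.1.1 z.1.2 ^ p ∂γ') ^ (1 / p) + (∫⁻ z, edist z.1.2 z.2 ^ p ∂γ') ^ (1 / p) :=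
        ENNReal.lintegral_Lp_add_le (by fun_prop) (by fun_prop) hp
    _ = (∫⁻ z, edist z.1 z.2 ^ p ∂γ) ^ (1 / p)
          + (∫⁻ x, ∫⁻ y, edist x y ^ p ∂κ x ∂γ.map Prod.snd) ^ (1 / p) := by
        have hcost : Measurable fun x => ∫⁻ y, edist x y ^ p ∂κ x :=
          Measurable.lintegral_kernel_prod_right (f := fun x y => edist x y ^ p) (by fun_prop)
        rw [Measure.lintegral_compProd (by fun_prop), Measure.lintegral_compProd (by fun_prop),
          lintegral_map hcost measurable_snd]
        simp

end Wasserstein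

section Fibers

variable {E F : Type*} [MeasurableSpace E]

theorem lintegral_eq_sum_fibers (μ : Measure E) (π : SimpleFunc E F) (f : E → ℝ≥0∞) :
    ∫⁻ x, f x ∂μ = ∑ s ∈ π.range, ∫⁻ x in π ⁻¹' {s}, f x ∂μ := by
  rw [← lintegral_biUnion_finset (fun s _ t _ hst => Disjoint.preimage π (by simpa using hst))
    fun s _ => π.measurableSet_fiber s]
  have hcover : ⋃ s ∈ π.range, π ⁻¹' {s} = Set.univ := by ext; simp
  rw [hcover, Measure.restrict_univ]

theorem setLIntegral_fiber_congr (μ : Measure E) (π : SimpleFunc E F) (f : F → E → ℝ≥0∞) (s : F) :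
    ∫⁻ x in π ⁻¹' {s}, f (π x) x ∂μ = ∫⁻ x in π ⁻¹' {s}, f s x ∂μ :=
  setLIntegral_congr_fun (π.measurableSet_fiber s) fun x (hx : π x = s) => by rw [hx]

/-- The density of `ρ` relative to `μ` coarsened to the cells of the partition of `E` into the
fibres of `π`. -/
noncomputable def cellDensity (μ ρ : Measure E) (π : SimpleFunc E F) : SimpleFunc E ℝ≥0∞ :=
  π.map fun s => ρ (π ⁻¹' {s}) / μ (π ⁻¹' {s})

theorem cellDensity_apply (μ ρ : Measure E) (π : SimpleFunc E F) (x : E) :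
    cellDensity μ ρ π x = ρ (π ⁻¹' {π x}) / μ (π ⁻¹' {π x}) := rfl

/-- Absolute continuity of `ρ` with respect to `μ` on the partition into the fibres of `π`. -/
def FiberAbsolutelyContinuous (ρ μ : Measure E) (π : SimpleFunc E F) : Prop :=
  ∀ s, μ (π ⁻¹' {s}) = 0 → ρ (π ⁻¹' {s}) = 0

variable {μ ρ : Measure E} {π : SimpleFunc E F}

theorem cellDensity_ne_top [IsFiniteMeasure ρ] (h : FiberAbsolutelyContinuous ρ μ π) (x : E) :
    cellDensity μ ρ π x ≠ ∞ := by
  rw [cellDensity_apply]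
  by_cases hx : μ (π ⁻¹' {π x}) = 0
  · simp [h _ hx]
  · exact ENNReal.div_ne_top (measure_ne_top _ _) hx

theorem setLIntegral_cellDensity_fiber [IsFiniteMeasure μ] (h : FiberAbsolutelyContinuous ρ μ π)
    (s : F) : ∫⁻ x in π ⁻¹' {s}, cellDensity μ ρ π x ∂μ = ρ (π ⁻¹' {s}) := by
  simp only [cellDensity_apply]
  rw [setLIntegral_fiber_congr μ π fun s _ => ρ (π ⁻¹' {s}) / μ (π ⁻¹' {s}),
    setLIntegral_const]
  by_cases hs : μ (π ⁻¹' {s}) = 0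
  · rw [hs, mul_zero, h s hs]
  · exact ENNReal.div_mul_cancel hs (measure_ne_top _ _)

theorem setLIntegral_cellDensity [IsFiniteMeasure μ] (h : FiberAbsolutelyContinuous ρ μ π)
    (T : Set F) : ∫⁻ x in π ⁻¹' T, cellDensity μ ρ π x ∂μ = ρ (π ⁻¹' T) := by
  classical
  have hfiber : ∀ s, π ⁻¹' {s} ∩ π ⁻¹' T = if s ∈ T then π ⁻¹' {s} else ∅ := by
    intro s
    split_ifs with hs <;> ext x <;> simp <;> grind
  rw [← Measure.restrict_apply_univ (π ⁻¹' T), ← lintegral_one,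
    lintegral_eq_sum_fibers _ π, lintegral_eq_sum_fibers _ π]
  refine Finset.sum_congr rfl fun s _ => ?_
  rw [Measure.restrict_restrict (π.measurableSet_fiber s),
    Measure.restrict_restrict (π.measurableSet_fiber s), hfiber]
  split_ifs
  · rw [setLIntegral_cellDensity_fiber h, setLIntegral_one]
  · simp

theorem lintegral_cellDensity [IsFiniteMeasure μ] (h : FiberAbsolutelyContinuous ρ μ π) :
    ∫⁻ x, cellDensity μ ρ π x ∂μ = ρ Set.univ := by
  simpa using setLIntegral_cellDensity h Set.univ

theorem cellDensity_const [IsProbabilityMeasure μ] [IsProbabilityMeasure ρ] (c : F) :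
    cellDensity μ ρ (SimpleFunc.const E c) = SimpleFunc.const E 1 := by
  ext x
  have hcell : SimpleFunc.const E c ⁻¹' {SimpleFunc.const E c x} = Set.univ := by ext; simp
  rw [cellDensity_apply, hcell, measure_univ, measure_univ, div_one, SimpleFunc.const_apply]

end Fibers

section Resampling

open ProbabilityTheory

variable {E : Type*} [MeasurableSpace E] (b : Measure E) (π : SimpleFunc E E) {u : E → ℝ≥0∞}

open Classical in
/-- The normalised restriction of `b` to the cell `π ⁻¹' {s}`; for a null cell the junk value
`dirac s` keeps it a probability measure. -/
noncomputable def cellLaw (s : E) : Measure E :=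
  if b (π ⁻¹' {s}) = 0 then Measure.dirac s else ProbabilityTheory.cond b (π ⁻¹' {s})

theorem measurable_resample (hu : Measurable u) :
    Measurable fun x => (1 - u x) • Measure.dirac x + u x • cellLaw b π (π x) := by
  refine Measure.measurable_of_measurable_coe _ fun s hs => ?_
  have hcellLaw : Measurable fun x => cellLaw b π (π x) s := (π.map (cellLaw b π · s)).measurable
  have hdirac : Measurable fun x : E => Measure.dirac x s :=
    (Measure.measurable_coe hs).comp Measure.measurable_dirac
  simp only [Measure.add_apply, Measure.smul_apply, smul_eq_mul]
  fun_prop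

/-- The kernel which keeps the point `x` with probability `1 - u x` and otherwise resamples it
according to `b` within its cell of `π`. -/
noncomputable def resample (hu : Measurable u) : Kernel E E :=
  ⟨_, measurable_resample b π hu⟩

variable (hu : Measurable u)

theorem lintegral_resample {f : E → ℝ≥0∞} (hf : Measurable f) (x : E) :
    ∫⁻ y, f y ∂resample b π hu x = (1 - u x) * f x + u x * ∫⁻ y, f y ∂cellLaw b π (π x) := by
  simp only [resample, Kernel.coe_mk]
  rw [lintegral_add_measure, lintegral_smul_measure, lintegral_smul_measure,
    lintegral_dirac' _ hf, smul_eq_mul, smul_eq_mul]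

variable [IsFiniteMeasure b]

instance isProbabilityMeasure_cellLaw (s : E) : IsProbabilityMeasure (cellLaw b π s) := by
  unfold cellLaw
  split_ifs with hs
  · infer_instance
  · exact cond_isProbabilityMeasure hs

theorem measure_fiber_smul_cellLaw (s : E) :
    b (π ⁻¹' {s}) • cellLaw b π s = b.restrict (π ⁻¹' {s}) := by
  unfold cellLaw
  split_ifs with hs
  · rw [hs, zero_smul, Measure.restrict_eq_zero.2 hs]
  · rw [ProbabilityTheory.cond, smul_smul, ENNReal.mul_inv_cancel hs (measure_ne_top _ _), one_smul]

theorem lintegral_mul_lintegral_cellLaw {l : Measure E} (hu : Measurable u)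
    (hcell : ∀ s, ∫⁻ x in π ⁻¹' {s}, u x ∂l = b (π ⁻¹' {s})) (H : E → E → ℝ≥0∞) :
    ∫⁻ x, u x * ∫⁻ y, H (π x) y ∂cellLaw b π (π x) ∂l = ∫⁻ y, H (π y) y ∂b := by
  rw [lintegral_eq_sum_fibers l π, lintegral_eq_sum_fibers b π]
  refine Finset.sum_congr rfl fun s _ => ?_
  rw [setLIntegral_fiber_congr l π fun s x => u x * ∫⁻ y, H s y ∂cellLaw b π s,
    setLIntegral_fiber_congr b π, lintegral_mul_const _ hu, hcell,
    ← measure_fiber_smul_cellLaw, lintegral_smul_measure, smul_eq_mul]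

theorem isMarkovKernel_resample (hu1 : ∀ x, u x ≤ 1) : IsMarkovKernel (resample b π hu) where
  isProbabilityMeasure x := ⟨by simp [resample, tsub_add_cancel_of_le (hu1 x)]⟩

theorem bind_resample {l : Measure E}
    (hcell : ∀ s, ∫⁻ x in π ⁻¹' {s}, u x ∂l = b (π ⁻¹' {s})) :
    l.bind (resample b π hu) = l.withDensity (fun x => 1 - u x) + b := by
  refine Measure.ext_of_lintegral _ fun f hf => ?_
  rw [Measure.lintegral_bind (Kernel.aemeasurable _) hf.aemeasurable]
  simp only [lintegral_resample b π hu hf]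
  rw [lintegral_add_left (by fun_prop),
    lintegral_mul_lintegral_cellLaw b π hu hcell fun _ => f, lintegral_add_measure,
    lintegral_withDensity_eq_lintegral_mul _ (by fun_prop) hf]
  rfl

variable [MetricSpace E] [OpensMeasurableSpace E] {p : ℝ}

theorem lintegral_edist_rpow_cellLaw_le (hp : 1 ≤ p) (x : E) :
    ∫⁻ y, edist x y ^ p ∂cellLaw b π (π x)
      ≤ 2 ^ (p - 1) *
        (edist x (π x) ^ p + ∫⁻ y, edist y (π x) ^ p ∂cellLaw b π (π x)) := by
  calc ∫⁻ y, edist x y ^ p ∂cellLaw b π (π x)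
      ≤ ∫⁻ y, 2 ^ (p - 1) * (edist x (π x) ^ p + edist y (π x) ^ p) ∂cellLaw b π (π x) := by
        refine lintegral_mono fun y => ?_
        refine le_trans ?_ (ENNReal.rpow_add_le_mul_rpow_add_rpow _ _ hp)
        gcongr
        exact edist_triangle_right _ _ _
    _ = _ := by
        rw [lintegral_const_mul _ (by fun_prop), lintegral_add_left (by fun_prop),
          lintegral_const, measure_univ, mul_one]

variable [TopologicalSpace.SeparableSpace E]

theorem lintegral_edist_rpow_resample_le (hp : 1 ≤ p) {l : Measure E}
    (hcell : ∀ s, ∫⁻ x in π ⁻¹' {s}, u x ∂l = b (π ⁻¹' {s})) :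
    ∫⁻ x, ∫⁻ y, edist x y ^ p ∂resample b π hu x ∂l
      ≤ 2 ^ (p - 1) * (∫⁻ x, u x * edist x (π x) ^ p ∂l + ∫⁻ x, edist x (π x) ^ p ∂b) := by
  have hp0 : 0 < p := by linarith
  have hπ := π.measurable
  calc ∫⁻ x, ∫⁻ y, edist x y ^ p ∂resample b π hu x ∂l
      = ∫⁻ x, u x * ∫⁻ y, edist x y ^ p ∂cellLaw b π (π x) ∂l := by
        refine lintegral_congr fun x => ?_
        rw [lintegral_resample b π hu (by fun_prop)]
        simp [hp0]
    _ ≤ ∫⁻ x, 2 ^ (p - 1) * (u x * edist x (π x) ^ p +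
          u x * ∫⁻ y, edist y (π x) ^ p ∂cellLaw b π (π x)) ∂l := by
        refine lintegral_mono fun x => ?_
        rw [← mul_add, mul_left_comm]
        gcongr
        exact lintegral_edist_rpow_cellLaw_le b π hp x
    _ = _ := by
        rw [lintegral_const_mul' _ _ (by finiteness), lintegral_add_left (by fun_prop),
          lintegral_mul_lintegral_cellLaw b π hu hcell fun s y => edist y s ^ p]

include hu in
theorem Wp_withDensity_add_le (hp : 1 ≤ p) (α l : Measure E) [IsFiniteMeasure α]
    (hu1 : ∀ x, u x ≤ 1) (hcell : ∀ s, ∫⁻ x in π ⁻¹' {s}, u x ∂l = b (π ⁻¹' {s})) :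
    Wp p α (l.withDensity (fun x => 1 - u x) + b) ≤ Wp p α l + (2 ^ (p - 1) *
      (∫⁻ x, u x * edist x (π x) ^ p ∂l + ∫⁻ x, edist x (π x) ^ p ∂b)) ^ (1 / p) := by
  have := isMarkovKernel_resample b π hu hu1
  rw [← bind_resample b π hu hcell]
  refine (Wp_bind_le hp α l _).trans ?_
  gcongr
  exact lintegral_edist_rpow_resample_le b π hu hp hcell

end Resampling

section AbsDiff

/-- The distance `|a - b|` of two extended nonnegative reals; one of the two truncated
subtractions vanishes. -/
noncomputable def absDiff (a b : ℝ≥0∞) : ℝ≥0∞ := (a - b) + (b - a)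

theorem absDiff_comm (a b : ℝ≥0∞) : absDiff a b = absDiff b a := add_comm _ _

theorem absDiff_le_add (a b : ℝ≥0∞) : absDiff a b ≤ a + b :=
  add_le_add tsub_le_self tsub_le_self

theorem absDiff_triangle (a b c : ℝ≥0∞) : absDiff a c ≤ absDiff a b + absDiff b c := by
  calc absDiff a c ≤ (a - b + (b - c)) + (c - b + (b - a)) :=
        add_le_add tsub_le_tsub_add_tsub tsub_le_tsub_add_tsub
    _ = absDiff a b + absDiff b c := by unfold absDiff; ring

theorem mul_absDiff {c : ℝ≥0∞} (hc : c ≠ ∞) (a b : ℝ≥0∞) :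
    c * absDiff a b = absDiff (c * a) (c * b) := by
  simp only [absDiff, mul_add, ENNReal.mul_sub fun _ _ => hc]

theorem absDiff_ofReal {a b : ℝ} (ha : 0 ≤ a) (hb : 0 ≤ b) :
    absDiff (ENNReal.ofReal a) (ENNReal.ofReal b) = ‖a - b‖ₑ := by
  rw [absDiff, ← ENNReal.ofReal_sub _ hb, ← ENNReal.ofReal_sub _ ha, Real.enorm_eq_ofReal_abs]
  rcases le_total a b with hab | hab
  · rw [ENNReal.ofReal_of_nonpos (sub_nonpos.2 hab), zero_add, abs_sub_comm,
      abs_of_nonneg (sub_nonneg.2 hab)]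
  · rw [ENNReal.ofReal_of_nonpos (sub_nonpos.2 hab), add_zero, abs_of_nonneg (sub_nonneg.2 hab)]

@[fun_prop]
theorem measurable_absDiff {α : Type*} [MeasurableSpace α] {f g : α → ℝ≥0∞} (hf : Measurable f)
    (hg : Measurable g) : Measurable fun x => absDiff (f x) (g x) :=
  (hf.sub hg).add (hg.sub hf)

end AbsDiff

section DensityStep

variable {E : Type*} [MeasurableSpace E] {μ : Measure E} {f g : E → ℝ≥0∞}

theorem setLIntegral_tsub_eq_tsub (hf : Measurable f) (hg : Measurable g) {s : Set E}
    (hfin : ∫⁻ x in s, f x ∂μ ≠ ∞) (h : ∫⁻ x in s, f x ∂μ = ∫⁻ x in s, g x ∂μ) :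
    ∫⁻ x in s, (f x - g x) ∂μ = ∫⁻ x in s, (g x - f x) ∂μ := by
  have hmin_fin : ∫⁻ x in s, min (f x) (g x) ∂μ ≠ ∞ :=
    ne_top_of_le_ne_top hfin (lintegral_mono fun x => min_le_left _ _)
  have hf_split : ∫⁻ x in s, (f x - g x) ∂μ + ∫⁻ x in s, min (f x) (g x) ∂μ
      = ∫⁻ x in s, f x ∂μ := by
    rw [← lintegral_add_left (by fun_prop)]
    simp only [tsub_add_min]
  have hg_split : ∫⁻ x in s, (g x - f x) ∂μ + ∫⁻ x in s, min (f x) (g x) ∂μ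
      = ∫⁻ x in s, g x ∂μ := by
    rw [← lintegral_add_left (by fun_prop)]
    simp only [min_comm (f _), tsub_add_min]
  exact (ENNReal.add_left_inj hmin_fin).1 (hf_split.trans (h.trans hg_split.symm))

theorem mul_one_sub_tsub_div_add {a : ℝ≥0∞} (ha : a ≠ ∞) (b : ℝ≥0∞) :
    a * (1 - (a - b) / a) + (b - a) = b := by
  rw [ENNReal.mul_sub fun _ _ => ha, mul_one, ENNReal.mul_div_cancel' (by simp_all) (by simp [ha])]
  rcases le_total a b with hab | hab
  · rw [tsub_eq_zero_of_le hab, tsub_zero, add_tsub_cancel_of_le hab]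
  · rw [ENNReal.sub_sub_cancel ha hab, tsub_eq_zero_of_le hab, add_zero]

variable [MetricSpace E] [OpensMeasurableSpace E] [TopologicalSpace.SeparableSpace E] {p : ℝ}

theorem Wp_withDensity_le_add_absDiff (hp : 1 ≤ p) (α : Measure E) [IsFiniteMeasure α]
    (hf : Measurable f) (hg : Measurable g) (hf_top : ∀ x, f x ≠ ∞) (hf_fin : ∫⁻ x, f x ∂μ ≠ ∞)
    (π : SimpleFunc E E)
    (hcell : ∀ s, ∫⁻ x in π ⁻¹' {s}, f x ∂μ = ∫⁻ x in π ⁻¹' {s}, g x ∂μ) :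
    Wp p α (μ.withDensity g) ≤ Wp p α (μ.withDensity f) +
      (2 ^ (p - 1) * ∫⁻ x, absDiff (f x) (g x) * edist x (π x) ^ p ∂μ) ^ (1 / p) := by
  have hπ := π.measurable
  let u : E → ℝ≥0∞ := fun x => (f x - g x) / f x
  have hu : Measurable u := by fun_prop
  have hu1 : ∀ x, u x ≤ 1 := fun x => ENNReal.div_le_of_le_mul (by simp)
  have hfu : ∀ x, f x * u x = f x - g x := fun x =>
    ENNReal.mul_div_cancel' (by simp_all) (by simp [hf_top])
  have hcell_sub : ∀ s, ∫⁻ x in π ⁻¹' {s}, (f x - g x) ∂μ = ∫⁻ x in π ⁻¹' {s}, (g x - f x) ∂μ :=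
    fun s => setLIntegral_tsub_eq_tsub hf hg
      (ne_top_of_le_ne_top hf_fin (setLIntegral_le_lintegral _ _)) (hcell s)
  have hint : ∫⁻ x, f x ∂μ = ∫⁻ x, g x ∂μ := by
    simp only [lintegral_eq_sum_fibers μ π, hcell]
  have hb_fin : IsFiniteMeasure (μ.withDensity fun x => g x - f x) :=
    isFiniteMeasure_withDensity
      (ne_top_of_le_ne_top (hint ▸ hf_fin) (lintegral_mono fun x => tsub_le_self))
  have hstep := Wp_withDensity_add_le (μ.withDensity fun x => g x - f x) π hu hp α
    (μ.withDensity f) hu1 fun s => by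
      have hs := π.measurableSet_fiber s
      rw [withDensity_apply _ hs, setLIntegral_withDensity_eq_setLIntegral_mul _ hf hu hs,
        ← hcell_sub s]
      simp only [Pi.mul_apply, hfu]
  have hg_eq : (f * fun x => 1 - u x) + (fun x => g x - f x) = g :=
    funext fun x => mul_one_sub_tsub_div_add (hf_top x) (g x)
  have hcost : ∫⁻ x, u x * edist x (π x) ^ p ∂μ.withDensity f
      + ∫⁻ x, edist x (π x) ^ p ∂μ.withDensity (fun x => g x - f x)
      = ∫⁻ x, absDiff (f x) (g x) * edist x (π x) ^ p ∂μ := by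
    rw [lintegral_withDensity_eq_lintegral_mul _ hf (by fun_prop),
      lintegral_withDensity_eq_lintegral_mul _ (by fun_prop) (by fun_prop),
      ← lintegral_add_left (by fun_prop)]
    simp only [Pi.mul_apply, ← mul_assoc, hfu, absDiff, add_mul]
  rw [hcost, ← withDensity_mul _ hf (by fun_prop), ← withDensity_add_left (by fun_prop),
    hg_eq] at hstep
  exact hstep

end DensityStep

section Interpolation

variable {E : Type*} [MeasurableSpace E] [MetricSpace E]

/-- Bound for the `p`-th power of the cost of redistributing `ρ` inside the cells of `π` so that it
becomes proportional to `μ` there. -/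
noncomputable def redistributionCost (p : ℝ) (μ ρ : Measure E) (π : SimpleFunc E E) : ℝ≥0∞ :=
  2 ^ (p - 1) *
    (∫⁻ x, edist x (π x) ^ p ∂ρ + ∫⁻ x, cellDensity μ ρ π x * edist x (π x) ^ p ∂μ)

/-- Bound for the `p`-th power of the cost of replacing the density of `ρ` on the cells of `π` by
the density on the larger cells of `π'`. -/
noncomputable def coarseningCost (p : ℝ) (μ ρ : Measure E) (π π' : SimpleFunc E E) : ℝ≥0∞ :=
  2 ^ (p - 1) *
    ∫⁻ x, absDiff (cellDensity μ ρ π x) (cellDensity μ ρ π' x) * edist x (π' x) ^ p ∂μ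

variable [OpensMeasurableSpace E] [TopologicalSpace.SeparableSpace E] {p : ℝ}
  {μ ρ : Measure E} [IsFiniteMeasure μ] [IsFiniteMeasure ρ]

theorem Wp_withDensity_cellDensity_le (hp : 1 ≤ p) {π : SimpleFunc E E}
    (hac : FiberAbsolutelyContinuous ρ μ π) :
    Wp p ρ (μ.withDensity (cellDensity μ ρ π)) ≤ redistributionCost p μ ρ π ^ (1 / p) := by
  have hπ := π.measurable
  have hfin : IsFiniteMeasure (μ.withDensity (cellDensity μ ρ π)) :=
    isFiniteMeasure_withDensity (by rw [lintegral_cellDensity hac]; finiteness)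
  have h := Wp_withDensity_add_le (μ.withDensity (cellDensity μ ρ π)) π
    (measurable_const (a := 1)) hp ρ ρ (fun _ => le_rfl) fun s => by
      rw [withDensity_apply _ (π.measurableSet_fiber s), setLIntegral_cellDensity_fiber hac,
        setLIntegral_one]
  rw [Wp_self (by linarith),
    lintegral_withDensity_eq_lintegral_mul _ (SimpleFunc.measurable _) (by fun_prop)] at h
  simpa [redistributionCost] using h

theorem Wp_withDensity_cellDensity_le_add (hp : 1 ≤ p) {π π' : SimpleFunc E E}
    (hnested : Function.FactorsThrough π' π) (hac : FiberAbsolutelyContinuous ρ μ π)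
    (hac' : FiberAbsolutelyContinuous ρ μ π') :
    Wp p ρ (μ.withDensity (cellDensity μ ρ π')) ≤
      Wp p ρ (μ.withDensity (cellDensity μ ρ π)) + coarseningCost p μ ρ π π' ^ (1 / p) := by
  refine Wp_withDensity_le_add_absDiff hp ρ (SimpleFunc.measurable _) (SimpleFunc.measurable _)
    (cellDensity_ne_top hac) (by rw [lintegral_cellDensity hac]; finiteness) π' fun s => ?_
  have hcells : π' ⁻¹' {s} = π ⁻¹' (π '' (π' ⁻¹' {s})) :=
    Set.Subset.antisymm (Set.subset_preimage_image _ _) fun x ⟨y, hy, hyx⟩ =>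
      (hnested hyx).symm.trans hy
  rw [setLIntegral_cellDensity_fiber hac', hcells, setLIntegral_cellDensity hac]

theorem Wp_withDensity_cellDensity_le_sum (hp : 1 ≤ p) {π : ℕ → SimpleFunc E E}
    (hnested : ∀ i, Function.FactorsThrough (π (i + 1)) (π i))
    (hac : ∀ i, FiberAbsolutelyContinuous ρ μ (π i)) (J : ℕ) :
    Wp p ρ (μ.withDensity (cellDensity μ ρ (π J))) ≤ redistributionCost p μ ρ (π 0) ^ (1 / p)
      + ∑ i ∈ Finset.range J, coarseningCost p μ ρ (π i) (π (i + 1)) ^ (1 / p) := by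
  induction J with
  | zero => simpa using Wp_withDensity_cellDensity_le hp (hac 0)
  | succ J ih =>
    rw [Finset.sum_range_succ, ← add_assoc]
    refine (Wp_withDensity_cellDensity_le_add hp (hnested J) (hac J) (hac (J + 1))).trans ?_
    gcongr

end Interpolation

section EmpiricalMeasure

variable {E F : Type*} [MeasurableSpace E] {n : ℕ}

theorem empiricalMeasure_apply (X : Fin n → E) {B : Set E} (hB : MeasurableSet B) :
    empiricalMeasure n X B = (n : ℝ≥0∞)⁻¹ * ∑ k, B.indicator 1 (X k) := by
  simp [empiricalMeasure, Measure.dirac_apply' _ hB]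

theorem isProbabilityMeasure_empiricalMeasure (hn : n ≠ 0) (X : Fin n → E) :
    IsProbabilityMeasure (empiricalMeasure n X) :=
  ⟨by simp [empiricalMeasure_apply, ENNReal.inv_mul_cancel, hn]⟩

theorem natCast_mul_empiricalMeasure (hn : n ≠ 0) (X : Fin n → E) {B : Set E}
    (hB : MeasurableSet B) : n * empiricalMeasure n X B = ∑ k, B.indicator 1 (X k) := by
  rw [empiricalMeasure_apply X hB, ← mul_assoc,
    ENNReal.mul_inv_cancel (by simpa using hn) (by simp), one_mul]

theorem measurable_empiricalMeasure_apply {B : Set E} (hB : MeasurableSet B) :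
    Measurable fun X : Fin n → E => empiricalMeasure n X B := by
  simp only [empiricalMeasure_apply _ hB]
  have : Measurable (B.indicator (1 : E → ℝ≥0∞)) := measurable_one.indicator hB
  fun_prop

theorem lintegral_empiricalMeasure (X : Fin n → E) {f : E → ℝ≥0∞} (hf : Measurable f) :
    ∫⁻ x, f x ∂empiricalMeasure n X = (n : ℝ≥0∞)⁻¹ * ∑ k, f (X k) := by
  rw [empiricalMeasure, lintegral_smul_measure, lintegral_finsetSum_measure, smul_eq_mul]
  simp only [lintegral_dirac' _ hf]

variable (μ : Measure E) [IsProbabilityMeasure μ]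

instance isProbabilityMeasure_sampleMeasure : IsProbabilityMeasure (sampleMeasure μ n) :=
  inferInstanceAs (IsProbabilityMeasure (Measure.pi _))

theorem measurePreserving_eval_sampleMeasure (k : Fin n) :
    MeasurePreserving (Function.eval k) (sampleMeasure μ n) μ :=
  measurePreserving_eval (fun _ => μ) k

theorem lintegral_lintegral_empiricalMeasure (hn : n ≠ 0) {f : E → ℝ≥0∞} (hf : Measurable f) :
    ∫⁻ X, ∫⁻ x, f x ∂empiricalMeasure n X ∂sampleMeasure μ n = ∫⁻ x, f x ∂μ := by
  simp only [lintegral_empiricalMeasure _ hf]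
  rw [lintegral_const_mul _ (by fun_prop), lintegral_finsetSum _ fun k _ => by fun_prop]
  have hcoord (k : Fin n) : ∫⁻ X, f (X k) ∂sampleMeasure μ n = ∫⁻ x, f x ∂μ :=
    (measurePreserving_eval_sampleMeasure μ k).lintegral_comp hf
  simp [hcoord, ← mul_assoc, ENNReal.inv_mul_cancel, hn]

theorem lintegral_empiricalMeasure_apply (hn : n ≠ 0) {B : Set E} (hB : MeasurableSet B) :
    ∫⁻ X, empiricalMeasure n X B ∂sampleMeasure μ n = μ B := by
  simpa only [lintegral_indicator_one hB] using
    lintegral_lintegral_empiricalMeasure μ hn (measurable_one.indicator hB)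

theorem ae_empiricalMeasure_apply_eq_zero (hn : n ≠ 0) {B : Set E} (hB : MeasurableSet B)
    (hμB : μ B = 0) : ∀ᵐ X ∂sampleMeasure μ n, empiricalMeasure n X B = 0 :=
  (lintegral_eq_zero_iff (measurable_empiricalMeasure_apply hB)).1
    ((lintegral_empiricalMeasure_apply μ hn hB).trans hμB)

theorem ae_fiberAbsolutelyContinuous_empiricalMeasure (hn : n ≠ 0) (π : SimpleFunc E F) :
    ∀ᵐ X ∂sampleMeasure μ n, FiberAbsolutelyContinuous (empiricalMeasure n X) μ π := by
  have hcells : ∀ᵐ X ∂sampleMeasure μ n, ∀ s ∈ π.range, μ (π ⁻¹' {s}) = 0 →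
      empiricalMeasure n X (π ⁻¹' {s}) = 0 := by
    rw [Filter.eventually_all_finset]
    refine fun s _ => ?_
    by_cases hs : μ (π ⁻¹' {s}) = 0
    · filter_upwards [ae_empiricalMeasure_apply_eq_zero μ hn (π.measurableSet_fiber s) hs]
        with X hX _ using hX
    · exact ae_of_all _ fun X h => absurd h hs
  filter_upwards [hcells] with X hX s hs
  by_cases hmem : s ∈ π.range
  · exact hX s hmem hs
  · rw [(SimpleFunc.preimage_eq_empty_iff π s).2 hmem, measure_empty]

theorem memLp_eval_sampleMeasure {f : E → ℝ} (hf : MemLp f 2 μ) (k : Fin n) :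
    MemLp (fun X => f (X k)) 2 (sampleMeasure μ n) :=
  hf.comp_measurePreserving (measurePreserving_eval_sampleMeasure μ k)

theorem integral_sum_sampleMeasure {f : E → ℝ} (hf : MemLp f 2 μ) :
    ∫ X, ∑ k, f (X k) ∂sampleMeasure μ n = n * ∫ x, f x ∂μ := by
  have heval (k : Fin n) : ∫ X, f (X k) ∂sampleMeasure μ n = ∫ x, f x ∂μ :=
    integral_comp_eval (μ := fun _ => μ) hf.aestronglyMeasurable
  rw [integral_finsetSum _ fun k _ => (memLp_eval_sampleMeasure μ hf k).integrable one_le_two]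
  simp [heval]

open ProbabilityTheory in
theorem variance_sum_sampleMeasure {f : E → ℝ} (hf : MemLp f 2 μ) :
    Var[fun X => ∑ k, f (X k); sampleMeasure μ n] = n * Var[f; μ] := by
  have h := variance_sum_pi (μ := fun _ : Fin n => μ) fun _ => hf
  rw [Finset.sum_const, Finset.card_fin, nsmul_eq_mul] at h
  rw [← h, sampleMeasure]
  congr 1
  ext X
  simp

open ProbabilityTheory in
theorem lintegral_enorm_sum_sub_le {f : E → ℝ} (hf : MemLp f 2 μ) :
    ∫⁻ X, ‖∑ k, f (X k) - n * ∫ x, f x ∂μ‖ₑ ∂sampleMeasure μ n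
      ≤ ENNReal.ofReal (n * Var[f; μ]) ^ (1 / 2 : ℝ) := by
  have hS : MemLp (fun X => ∑ k, f (X k)) 2 (sampleMeasure μ n) :=
    memLp_finsetSum _ fun k _ => memLp_eval_sampleMeasure μ hf k
  have hL1_le_L2 := eLpNorm'_le_eLpNorm'_of_exponent_le one_pos one_le_two
    (μ := sampleMeasure μ n)
    (hS.aestronglyMeasurable.sub (aestronglyMeasurable_const (b := n * ∫ x, f x ∂μ)))
  have hL2 := hS.ofReal_variance_eq
  simp only [evariance, ← ENNReal.rpow_two, integral_sum_sampleMeasure μ hf,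
    variance_sum_sampleMeasure μ hf] at hL2
  simpa [eLpNorm', hL2] using hL1_le_L2

end EmpiricalMeasure

section Deviation

variable {E : Type*} [MeasurableSpace E] {n : ℕ} (μ : Measure E) [IsProbabilityMeasure μ]
  {B B' : Set E} {t : ℝ}

open ProbabilityTheory in
theorem lintegral_absDiff_natCast_mul_empiricalMeasure_le (hn : n ≠ 0) (hB : MeasurableSet B) :
    ∫⁻ X, absDiff (n * empiricalMeasure n X B) (n * μ B) ∂sampleMeasure μ n
      ≤ (n * μ B) ^ (1 / 2 : ℝ) := by
  let f : E → ℝ := B.indicator 1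
  have hf : MemLp f 2 μ := memLp_indicator_const 2 hB (1 : ℝ) (Or.inr (measure_ne_top _ _))
  have hf0 : ∀ x, 0 ≤ f x := Set.indicator_nonneg fun _ _ => zero_le_one
  have hmean : ∫ x, f x ∂μ = μ.real B := integral_indicator_one hB
  have hvar : Var[f; μ] ≤ μ.real B := by
    have hsq : f ^ 2 = f := by ext x; by_cases hx : x ∈ B <;> simp [f, hx]
    simpa only [hsq, hmean] using variance_le_expectation_sq hf.aestronglyMeasurable
  have hμB : n * μ B = ENNReal.ofReal (n * μ.real B) := by
    rw [ENNReal.ofReal_mul (by positivity), ENNReal.ofReal_natCast, ofReal_measureReal]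
  have hcount : ∀ X : Fin n → E, n * empiricalMeasure n X B = ENNReal.ofReal (∑ k, f (X k)) := by
    intro X
    rw [natCast_mul_empiricalMeasure hn X hB, ENNReal.ofReal_sum_of_nonneg fun k _ => hf0 _]
    exact Finset.sum_congr rfl fun k _ => by by_cases hx : X k ∈ B <;> simp [f, hx]
  calc ∫⁻ X, absDiff (n * empiricalMeasure n X B) (n * μ B) ∂sampleMeasure μ n
      = ∫⁻ X, ‖∑ k, f (X k) - n * ∫ x, f x ∂μ‖ₑ ∂sampleMeasure μ n := by
        refine lintegral_congr fun X => ?_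
        rw [hcount, hμB, hmean,
          absDiff_ofReal (Finset.sum_nonneg fun k _ => hf0 _) (by positivity)]
    _ ≤ ENNReal.ofReal (n * Var[f; μ]) ^ (1 / 2 : ℝ) := lintegral_enorm_sum_sub_le μ hf
    _ ≤ (n * μ B) ^ (1 / 2 : ℝ) := by rw [hμB]; gcongr

theorem lintegral_absDiff_empiricalMeasure_div_le_rpow (hn : n ≠ 0) (hB : MeasurableSet B)
    (hμB : μ B ≠ 0) :
    ∫⁻ X, absDiff (empiricalMeasure n X B / μ B) 1 ∂sampleMeasure μ n
      ≤ (n * μ B) ^ (-(1 / 2) : ℝ) := by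
  have hn' : (n : ℝ≥0∞) ≠ 0 := by simpa using hn
  have hnB : n * μ B ≠ 0 := mul_ne_zero hn' hμB
  have hnB' : n * μ B ≠ ∞ := by finiteness
  have hscale : ∀ X : Fin n → E, absDiff (empiricalMeasure n X B / μ B) 1
      = (n * μ B)⁻¹ * absDiff (n * empiricalMeasure n X B) (n * μ B) := by
    intro X
    rw [mul_absDiff (ENNReal.inv_ne_top.2 hnB), ENNReal.inv_mul_cancel hnB hnB',
      mul_comm _ (_ * _), ← div_eq_mul_inv, ENNReal.mul_div_mul_left _ _ hn' (by simp)]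
  simp only [hscale]
  rw [lintegral_const_mul' _ _ (ENNReal.inv_ne_top.2 hnB)]
  calc (n * μ B)⁻¹ * ∫⁻ X, absDiff (n * empiricalMeasure n X B) (n * μ B) ∂sampleMeasure μ n
      ≤ (n * μ B)⁻¹ * (n * μ B) ^ (1 / 2 : ℝ) := by
        gcongr
        exact lintegral_absDiff_natCast_mul_empiricalMeasure_le μ hn hB
    _ = (n * μ B) ^ (-(1 / 2) : ℝ) := by
        rw [← ENNReal.rpow_neg_one, ← ENNReal.rpow_add _ _ hnB hnB']
        norm_num

theorem lintegral_absDiff_empiricalMeasure_div_le_two (hn : n ≠ 0) (hB : MeasurableSet B)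
    (hμB : μ B ≠ 0) :
    ∫⁻ X, absDiff (empiricalMeasure n X B / μ B) 1 ∂sampleMeasure μ n ≤ 2 := by
  calc ∫⁻ X, absDiff (empiricalMeasure n X B / μ B) 1 ∂sampleMeasure μ n
      ≤ ∫⁻ X, (empiricalMeasure n X B / μ B + 1) ∂sampleMeasure μ n :=
        lintegral_mono fun X => absDiff_le_add _ _
    _ = μ B / μ B + 1 := by
        simp only [div_eq_mul_inv]
        rw [lintegral_add_right _ measurable_const,
          lintegral_mul_const _ (measurable_empiricalMeasure_apply hB),
          lintegral_empiricalMeasure_apply μ hn hB, lintegral_one, measure_univ]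
    _ = 2 := by rw [ENNReal.div_self hμB (measure_ne_top _ _), one_add_one_eq_two]

theorem lintegral_absDiff_empiricalMeasure_div_le (hn : n ≠ 0) (hB : MeasurableSet B)
    (ht0 : 0 < t) (ht : t ≤ 1 / 2) :
    ∫⁻ X, absDiff (empiricalMeasure n X B / μ B) 1 ∂sampleMeasure μ n
      ≤ 2 * (n * μ B) ^ (-t) := by
  rcases eq_or_ne (μ B) 0 with hμB | hμB
  · simp [hμB, ht0]
  rcases le_total (n * μ B) 1 with hsmall | hlarge
  · refine (lintegral_absDiff_empiricalMeasure_div_le_two μ hn hB hμB).trans ?_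
    rw [ENNReal.rpow_neg]
    exact le_mul_of_one_le_right' (ENNReal.one_le_inv.2 (ENNReal.rpow_le_one hsmall ht0.le))
  · calc ∫⁻ X, absDiff (empiricalMeasure n X B / μ B) 1 ∂sampleMeasure μ n
        ≤ (n * μ B) ^ (-(1 / 2) : ℝ) :=
          lintegral_absDiff_empiricalMeasure_div_le_rpow μ hn hB hμB
      _ ≤ (n * μ B) ^ (-t) := ENNReal.rpow_le_rpow_of_exponent_le hlarge (neg_le_neg ht)
      _ ≤ 2 * (n * μ B) ^ (-t) := le_mul_of_one_le_left' one_le_two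

theorem lintegral_absDiff_empiricalMeasure_div_div_le (hn : n ≠ 0) (hB : MeasurableSet B)
    (hB' : MeasurableSet B') (hBB' : B ⊆ B') (ht0 : 0 < t) (ht : t ≤ 1 / 2) :
    ∫⁻ X, absDiff (empiricalMeasure n X B / μ B) (empiricalMeasure n X B' / μ B')
      ∂sampleMeasure μ n ≤ 4 * (n * μ B) ^ (-t) := by
  have hmeas : Measurable fun X : Fin n → E => absDiff (empiricalMeasure n X B / μ B) 1 :=
    measurable_absDiff ((measurable_empiricalMeasure_apply hB).div_const _) measurable_const
  calc ∫⁻ X, absDiff (empiricalMeasure n X B / μ B) (empiricalMeasure n X B' / μ B')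
        ∂sampleMeasure μ n
      ≤ ∫⁻ X, (absDiff (empiricalMeasure n X B / μ B) 1
          + absDiff (empiricalMeasure n X B' / μ B') 1) ∂sampleMeasure μ n :=
        lintegral_mono fun X => (absDiff_triangle _ 1 _).trans_eq (by rw [absDiff_comm 1])
    _ ≤ 2 * (n * μ B) ^ (-t) + 2 * (n * μ B') ^ (-t) := by
        rw [lintegral_add_left hmeas]
        gcongr <;> exact lintegral_absDiff_empiricalMeasure_div_le μ hn ‹_› ht0 ht
    _ ≤ 2 * (n * μ B) ^ (-t) + 2 * (n * μ B) ^ (-t) := by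
        simp only [ENNReal.rpow_neg]
        gcongr
    _ = 4 * (n * μ B) ^ (-t) := by rw [← add_mul]; norm_num

end Deviation

section ExpectedCost

variable {E F : Type*} [MeasurableSpace E] {n : ℕ} (μ : Measure E)

/-- The `L^q` distance between a `μ`-random point and the centre of its cell, where the cell of `x`
is `π ⁻¹' {π x}` and its centre is `π x`. -/
noncomputable def distortion [MetricSpace E] (q : ℝ) (μ : Measure E) (π : SimpleFunc E E) : ℝ≥0∞ :=
  eLpNorm' (fun x => edist x (π x)) q μ

theorem distortion_rpow [MetricSpace E] {q : ℝ} (hq : q ≠ 0) (π : SimpleFunc E E) :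
    distortion q μ π ^ q = ∫⁻ x, edist x (π x) ^ q ∂μ := by
  simp [distortion, eLpNorm', ← ENNReal.rpow_mul, hq]

theorem measurable_cellDensity_empiricalMeasure (π : SimpleFunc E F) :
    Measurable fun z : (Fin n → E) × E => cellDensity μ (empiricalMeasure n z.1) π z.2 :=
  SimpleFunc.measurable_bind (π.comp Prod.snd measurable_snd)
    (fun s z => empiricalMeasure n z.1 (π ⁻¹' {s}) / μ (π ⁻¹' {s})) fun s => Measurable.div_const
      ((measurable_empiricalMeasure_apply (π.measurableSet_fiber s)).comp measurable_fst) _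

theorem measurable_cellDensity_empiricalMeasure_apply (π : SimpleFunc E F) (x : E) :
    Measurable fun X : Fin n → E => cellDensity μ (empiricalMeasure n X) π x := by
  simp only [cellDensity_apply]
  exact (measurable_empiricalMeasure_apply (π.measurableSet_fiber (π x))).div_const _

variable [IsProbabilityMeasure μ]

theorem lintegral_cellDensity_empiricalMeasure_le_one (hn : n ≠ 0) (π : SimpleFunc E F) (x : E) :
    ∫⁻ X, cellDensity μ (empiricalMeasure n X) π x ∂sampleMeasure μ n ≤ 1 := by
  have hB := π.measurableSet_fiber (π x)
  simp only [cellDensity_apply, div_eq_mul_inv]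
  rw [lintegral_mul_const _ (measurable_empiricalMeasure_apply hB),
    lintegral_empiricalMeasure_apply μ hn hB]
  exact ENNReal.mul_inv_le_one _

theorem lintegral_inv_natCast_mul_measure_fiber_le (n : ℕ) (π : SimpleFunc E F) :
    ∫⁻ x, (n * μ (π ⁻¹' {π x}))⁻¹ ∂μ ≤ π.range.card / n := by
  rw [lintegral_eq_sum_fibers μ π]
  calc ∑ s ∈ π.range, ∫⁻ x in π ⁻¹' {s}, (n * μ (π ⁻¹' {π x}))⁻¹ ∂μ
      ≤ π.range.card • (n : ℝ≥0∞)⁻¹ := by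
        refine Finset.sum_le_card_nsmul _ _ _ fun s _ => ?_
        rw [setLIntegral_fiber_congr μ π fun s _ => (n * μ (π ⁻¹' {s}))⁻¹, setLIntegral_const,
          ENNReal.mul_inv (Or.inr (measure_ne_top _ _)) (Or.inl (by simp)), mul_assoc]
        exact mul_le_of_le_one_right' (ENNReal.inv_mul_le_one _)
    _ = π.range.card / n := by rw [nsmul_eq_mul, div_eq_mul_inv]

variable [MetricSpace E] [OpensMeasurableSpace E] [TopologicalSpace.SeparableSpace E] {p q : ℝ}

theorem measurable_coarseningCost_empiricalMeasure (π π' : SimpleFunc E E) :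
    Measurable fun X : Fin n → E => coarseningCost p μ (empiricalMeasure n X) π π' := by
  have hπ' := π'.measurable
  exact Measurable.const_mul (Measurable.lintegral_prod_right'
    (f := fun z : (Fin n → E) × E => absDiff (cellDensity μ (empiricalMeasure n z.1) π z.2)
      (cellDensity μ (empiricalMeasure n z.1) π' z.2) * edist z.2 (π' z.2) ^ p)
    ((measurable_absDiff (measurable_cellDensity_empiricalMeasure μ π)
      (measurable_cellDensity_empiricalMeasure μ π')).mul (by fun_prop))) _

theorem measurable_redistributionCost_empiricalMeasure (π : SimpleFunc E E) :
    Measurable fun X : Fin n → E => redistributionCost p μ (empiricalMeasure n X) π := by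
  have hπ := π.measurable
  have hdist : Measurable fun x => edist x (π x) ^ p := by fun_prop
  simp only [redistributionCost, lintegral_empiricalMeasure _ hdist]
  refine Measurable.const_mul (Measurable.add (by fun_prop) ?_) _
  exact Measurable.lintegral_prod_right'
    (f := fun z : (Fin n → E) × E => cellDensity μ (empiricalMeasure n z.1) π z.2 *
      edist z.2 (π z.2) ^ p)
    ((measurable_cellDensity_empiricalMeasure μ π).mul (by fun_prop))

theorem lintegral_redistributionCost_le (hp : 1 ≤ p) (hn : n ≠ 0) (π : SimpleFunc E E) :
    ∫⁻ X, redistributionCost p μ (empiricalMeasure n X) π ∂sampleMeasure μ n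
      ≤ (2 * distortion p μ π) ^ p := by
  have hπ := π.measurable
  have hdist : Measurable fun x => edist x (π x) ^ p := by fun_prop
  have hG := measurable_cellDensity_empiricalMeasure (n := n) μ π
  have hjoint : Measurable fun z : (Fin n → E) × E =>
      cellDensity μ (empiricalMeasure n z.1) π z.2 * edist z.2 (π z.2) ^ p := by fun_prop
  have hmass : ∫⁻ X, ∫⁻ x, cellDensity μ (empiricalMeasure n X) π x * edist x (π x) ^ p ∂μ
      ∂sampleMeasure μ n ≤ ∫⁻ x, edist x (π x) ^ p ∂μ := by
    rw [lintegral_lintegral_swap hjoint.aemeasurable]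
    refine lintegral_mono fun x => ?_
    rw [lintegral_mul_const _ (measurable_cellDensity_empiricalMeasure_apply μ π x)]
    exact mul_le_of_le_one_left' (lintegral_cellDensity_empiricalMeasure_le_one μ hn π x)
  calc ∫⁻ X, redistributionCost p μ (empiricalMeasure n X) π ∂sampleMeasure μ n
      ≤ 2 ^ (p - 1) * (∫⁻ x, edist x (π x) ^ p ∂μ + ∫⁻ x, edist x (π x) ^ p ∂μ) := by
        simp only [redistributionCost]
        rw [lintegral_const_mul' _ _ (by finiteness),
          lintegral_add_right _ hjoint.lintegral_prod_right',
          lintegral_lintegral_empiricalMeasure μ hn hdist]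
        gcongr
    _ = (2 * distortion p μ π) ^ p := by
        rw [ENNReal.mul_rpow_of_nonneg _ _ (by linarith), distortion_rpow μ (by linarith),
          ← two_mul, ← mul_assoc]
        nth_rw 2 [← ENNReal.rpow_one 2]
        rw [← ENNReal.rpow_add _ _ (by simp) (by simp), sub_add_cancel]

theorem lintegral_redistributionCost_rpow_le (hp : 1 ≤ p) (hn : n ≠ 0) (π : SimpleFunc E E) :
    (∫⁻ X, redistributionCost p μ (empiricalMeasure n X) π ∂sampleMeasure μ n) ^ (1 / p)
      ≤ 2 * distortion p μ π := by
  rw [one_div, ENNReal.rpow_inv_le_iff (by linarith)]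
  exact lintegral_redistributionCost_le μ hp hn π

theorem lintegral_coarseningCost_le (hp : 0 < p) (hpq : p < q) (hq : q ≤ 2 * p) (hn : n ≠ 0)
    {π π' : SimpleFunc E E} (hnested : Function.FactorsThrough π' π) :
    ∫⁻ X, coarseningCost p μ (empiricalMeasure n X) π π' ∂sampleMeasure μ n ≤ 2 ^ (p - 1) *
      (4 * ∫⁻ x, ((n * μ (π ⁻¹' {π x}))⁻¹) ^ (1 - p / q) * edist x (π' x) ^ p ∂μ) := by
  have hπ' := π'.measurable
  have hjoint : Measurable fun z : (Fin n → E) × E =>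
      absDiff (cellDensity μ (empiricalMeasure n z.1) π z.2)
        (cellDensity μ (empiricalMeasure n z.1) π' z.2) * edist z.2 (π' z.2) ^ p :=
    (measurable_absDiff (measurable_cellDensity_empiricalMeasure μ π)
      (measurable_cellDensity_empiricalMeasure μ π')).mul (by fun_prop)
  have ht0 : 0 < 1 - p / q := by rw [sub_pos, div_lt_one (by linarith)]; exact hpq
  have ht : 1 - p / q ≤ 1 / 2 := by
    have : 1 / 2 ≤ p / q := by rw [div_le_div_iff₀ two_pos (by linarith)]; linarith
    linarith
  simp only [coarseningCost]
  rw [lintegral_const_mul' _ _ (by finiteness), lintegral_lintegral_swap hjoint.aemeasurable,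
    ← lintegral_const_mul' 4 _ (by simp)]
  refine mul_le_mul_right (lintegral_mono fun x => ?_) _
  rw [lintegral_mul_const _ (measurable_absDiff
    (measurable_cellDensity_empiricalMeasure_apply μ π x)
    (measurable_cellDensity_empiricalMeasure_apply μ π' x)), ← mul_assoc, ENNReal.inv_rpow,
    ← ENNReal.rpow_neg]
  gcongr
  exact lintegral_absDiff_empiricalMeasure_div_div_le μ hn (π.measurableSet_fiber _)
    (π'.measurableSet_fiber _) (fun y hy => hnested hy) ht0 ht

theorem lintegral_rpow_fiber_mul_edist_rpow_le (hp : 0 < p) (hpq : p < q) (n : ℕ)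
    (π π' : SimpleFunc E E) :
    ∫⁻ x, ((n * μ (π ⁻¹' {π x}))⁻¹) ^ (1 - p / q) * edist x (π' x) ^ p ∂μ
      ≤ (π.range.card / n) ^ (1 - p / q) * distortion q μ π' ^ p := by
  have hq : 0 < q := hp.trans hpq
  have hπ' := π'.measurable
  have hcell : Measurable fun x => (n * μ (π ⁻¹' {π x}) : ℝ≥0∞)⁻¹ :=
    (π.map fun s => (n * μ (π ⁻¹' {s}) : ℝ≥0∞)⁻¹).measurable
  calc ∫⁻ x, ((n * μ (π ⁻¹' {π x}))⁻¹) ^ (1 - p / q) * edist x (π' x) ^ p ∂μ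
      = ∫⁻ x, ((n * μ (π ⁻¹' {π x}))⁻¹) ^ (1 - p / q) * (edist x (π' x) ^ q) ^ (p / q) ∂μ := by
        simp only [← ENNReal.rpow_mul, mul_div_cancel₀ p hq.ne']
    _ ≤ (∫⁻ x, (n * μ (π ⁻¹' {π x}))⁻¹ ∂μ) ^ (1 - p / q) *
          (∫⁻ x, edist x (π' x) ^ q ∂μ) ^ (p / q) :=
        ENNReal.lintegral_mul_norm_pow_le hcell.aemeasurable
          (Measurable.aemeasurable (by fun_prop))
          (sub_nonneg.2 ((div_le_one hq).2 hpq.le)) (by positivity) (by ring)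
    _ ≤ (π.range.card / n) ^ (1 - p / q) * distortion q μ π' ^ p := by
        rw [← distortion_rpow μ hq.ne', ← ENNReal.rpow_mul, mul_div_cancel₀ p hq.ne']
        gcongr
        · exact sub_nonneg.2 ((div_le_one hq).2 hpq.le)
        · exact lintegral_inv_natCast_mul_measure_fiber_le μ n π

theorem lintegral_coarseningCost_rpow_le (hp : 1 ≤ p) (hpq : p < q) (hq : q ≤ 2 * p) (hn : n ≠ 0)
    {π π' : SimpleFunc E E} (hnested : Function.FactorsThrough π' π) :
    (∫⁻ X, coarseningCost p μ (empiricalMeasure n X) π π' ∂sampleMeasure μ n) ^ (1 / p)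
      ≤ 4 * distortion q μ π' * (π.range.card / n) ^ (1 / p - 1 / q) := by
  have hp0 : 0 < p := by linarith
  have hq0 : 0 < q := by linarith
  have hconst : (2 : ℝ≥0∞) ^ (p - 1) * 4 ≤ 4 ^ p := by
    calc (2 : ℝ≥0∞) ^ (p - 1) * 4 ≤ 4 ^ (p - 1) * 4 ^ (1 : ℝ) := by
          rw [ENNReal.rpow_one]; gcongr; norm_num
      _ = 4 ^ p := by rw [← ENNReal.rpow_add _ _ (by simp) (by simp), sub_add_cancel]
  have hexp : (1 - p / q) * (1 / p) = 1 / p - 1 / q := by field_simp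
  calc (∫⁻ X, coarseningCost p μ (empiricalMeasure n X) π π' ∂sampleMeasure μ n) ^ (1 / p)
      ≤ (4 ^ p * ((π.range.card / n) ^ (1 - p / q) * distortion q μ π' ^ p)) ^ (1 / p) := by
        refine ENNReal.rpow_le_rpow ((lintegral_coarseningCost_le μ hp0 hpq hq hn hnested).trans ?_)
          (by positivity)
        rw [← mul_assoc]
        gcongr
        exact lintegral_rpow_fiber_mul_edist_rpow_le μ hp0 hpq n π π'
    _ = 4 * distortion q μ π' * (π.range.card / n) ^ (1 / p - 1 / q) := by
        simp only [ENNReal.mul_rpow_of_nonneg _ _ (one_div_nonneg.2 hp0.le), ← ENNReal.rpow_mul,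
          hexp, mul_one_div_cancel hp0.ne', ENNReal.rpow_one]
        ring

end ExpectedCost

section Multiscale

variable {E : Type*} [MeasurableSpace E] [MetricSpace E] [OpensMeasurableSpace E]
  [TopologicalSpace.SeparableSpace E] {n : ℕ} {p q : ℝ} {μ : Measure E} [IsProbabilityMeasure μ]

theorem distortion_le_distortion_of_exponent_le (hp : 0 < p) (hpq : p ≤ q) (π : SimpleFunc E E) :
    distortion p μ π ≤ distortion q μ π := by
  have hπ := π.measurable
  exact eLpNorm'_le_eLpNorm'_of_exponent_le hp hpq μ
    (Measurable.aestronglyMeasurable (by fun_prop))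

theorem ae_Wp_empiricalMeasure_le_sum (hp : 1 ≤ p) (hn : n ≠ 0) {π : ℕ → SimpleFunc E E}
    (hnested : ∀ i, Function.FactorsThrough (π (i + 1)) (π i)) {J : ℕ} {x₀ : E}
    (hJ : π J = SimpleFunc.const E x₀) :
    ∀ᵐ X ∂sampleMeasure μ n, Wp p (empiricalMeasure n X) μ ≤
      redistributionCost p μ (empiricalMeasure n X) (π 0) ^ (1 / p) + ∑ i ∈ Finset.range J,
        coarseningCost p μ (empiricalMeasure n X) (π i) (π (i + 1)) ^ (1 / p) := by
  filter_upwards [ae_all_iff.2 fun i => ae_fiberAbsolutelyContinuous_empiricalMeasure μ hn (π i)]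
    with X hac
  have := isProbabilityMeasure_empiricalMeasure hn X
  have h := Wp_withDensity_cellDensity_le_sum hp hnested hac J
  rwa [hJ, cellDensity_const, SimpleFunc.coe_const, Function.const_one, withDensity_one] at h

theorem expWpPow_le_sum (hp : 1 ≤ p) (hpq : p < q) (hq : q ≤ 2 * p) (hn : n ≠ 0)
    {π : ℕ → SimpleFunc E E} (hnested : ∀ i, Function.FactorsThrough (π (i + 1)) (π i))
    {J : ℕ} {x₀ : E} (hJ : π J = SimpleFunc.const E x₀) :
    expWpPow p μ n ≤ 2 * distortion q μ (π 0) + ∑ i ∈ Finset.range J,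
      4 * distortion q μ (π (i + 1)) * ((π i).range.card / n) ^ (1 / p - 1 / q) := by
  have hp0 : 0 < p := by linarith
  have hrpow (f : (Fin n → E) → ℝ≥0∞) : eLpNorm' (fun X => f X ^ (1 / p)) p (sampleMeasure μ n)
      = (∫⁻ X, f X ∂sampleMeasure μ n) ^ (1 / p) := by
    simp [eLpNorm', ← ENNReal.rpow_mul, hp0.ne']
  let R : (Fin n → E) → ℝ≥0∞ := fun X =>
    redistributionCost p μ (empiricalMeasure n X) (π 0) ^ (1 / p)
  let C : ℕ → (Fin n → E) → ℝ≥0∞ := fun i X =>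
    coarseningCost p μ (empiricalMeasure n X) (π i) (π (i + 1)) ^ (1 / p)
  have hR : Measurable R := (measurable_redistributionCost_empiricalMeasure μ (π 0)).pow_const _
  have hC (i : ℕ) : Measurable (C i) :=
    (measurable_coarseningCost_empiricalMeasure μ (π i) (π (i + 1))).pow_const _
  calc expWpPow p μ n
      = eLpNorm' (fun X => Wp p (empiricalMeasure n X) μ) p (sampleMeasure μ n) := by
        simp [expWpPow, eLpNorm']
    _ ≤ eLpNorm' (R + ∑ i ∈ Finset.range J, C i) p (sampleMeasure μ n) :=
        eLpNorm'_mono_enorm_ae hp0.le <| by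
          simpa [R, C] using ae_Wp_empiricalMeasure_le_sum hp hn hnested hJ
    _ ≤ eLpNorm' R p (sampleMeasure μ n)
          + ∑ i ∈ Finset.range J, eLpNorm' (C i) p (sampleMeasure μ n) := by
        refine (eLpNorm'_add_le hR.aestronglyMeasurable
          (Finset.aestronglyMeasurable_sum _ fun i _ => (hC i).aestronglyMeasurable) hp).trans ?_
        gcongr
        exact eLpNorm'_sum_le (fun i _ => (hC i).aestronglyMeasurable) hp
    _ ≤ 2 * distortion q μ (π 0) + ∑ i ∈ Finset.range J,
          4 * distortion q μ (π (i + 1)) * ((π i).range.card / n) ^ (1 / p - 1 / q) := by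
        simp only [R, C, hrpow]
        gcongr with i
        · refine (lintegral_redistributionCost_rpow_le μ hp hn (π 0)).trans ?_
          gcongr
          exact distortion_le_distortion_of_exponent_le hp0 hpq.le (π 0)
        · exact lintegral_coarseningCost_rpow_le μ hp hpq hq hn (hnested i)

end Multiscale

section Quantizers

variable {E : Type*} [MeasurableSpace E]

/-- The compositions `Q i ∘ ⋯ ∘ Q 0`: their cells grow with `i`, while the values are still those
of `Q i`. -/
noncomputable def composeQuantizers (Q : ℕ → SimpleFunc E E) : ℕ → SimpleFunc E E
  | 0 => Q 0
  | i + 1 => (Q (i + 1)).comp (composeQuantizers Q i) (composeQuantizers Q i).measurable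

theorem card_range_composeQuantizers_le (Q : ℕ → SimpleFunc E E) (i : ℕ) :
    (composeQuantizers Q i).range.card ≤ (Q i).range.card := by
  cases i with
  | zero => rfl
  | succ i => exact Finset.card_le_card (SimpleFunc.range_comp_subset_range _ _)

theorem factorsThrough_composeQuantizers (Q : ℕ → SimpleFunc E E) (i : ℕ) :
    Function.FactorsThrough (composeQuantizers Q (i + 1)) (composeQuantizers Q i) :=
  fun _ _ h => congrArg (Q (i + 1)) h

variable [MetricSpace E]

/-- A finitely valued map sending every point to a nearest point of its range. -/
def IsQuantizer (Q : SimpleFunc E E) : Prop :=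
  ∀ x y, edist x (Q x) ≤ edist x (Q y)

variable [OpensMeasurableSpace E]

theorem exists_simpleFunc_mem_edist_le {S : Finset E} (hS : S.Nonempty) :
    ∃ Q : SimpleFunc E E, ∀ x, Q x ∈ S ∧ ∀ s ∈ S, edist x (Q x) ≤ edist x s := by
  obtain ⟨e, he⟩ := S.countable_toSet.exists_eq_range hS
  have hmem (k : ℕ) : e k ∈ S := by
    rw [← Finset.mem_coe, he]
    exact Set.mem_range_self k
  choose! k hk using fun s (hs : s ∈ S) => (he ▸ Finset.mem_coe.2 hs : s ∈ Set.range e)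
  refine ⟨SimpleFunc.nearestPt e (S.sup k), fun x => ⟨hmem _, fun s hs => ?_⟩⟩
  simpa only [edist_comm x, hk s hs] using
    SimpleFunc.edist_nearestPt_le e x (Finset.le_sup hs : k s ≤ S.sup k)

variable [TopologicalSpace.SeparableSpace E] {q : ℝ} {μ : Measure E}

theorem distortion_le_of_map_eq (hq : 0 < q) {Q : SimpleFunc E E} {S : Finset E}
    (hQ : ∀ x, ∀ s ∈ S, edist x (Q x) ≤ edist x s) {γ : Measure (E × E)}
    (hfst : γ.map Prod.fst = μ) (hsnd : γ.map Prod.snd (↑S)ᶜ = 0) :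
    distortion q μ Q ≤ (∫⁻ z, edist z.1 z.2 ^ q ∂γ) ^ (1 / q) := by
  have hQ_meas := Q.measurable
  have hsupp : ∀ᵐ z ∂γ, z.2 ∈ S := ae_of_ae_map (p := (· ∈ S)) measurable_snd.aemeasurable hsnd
  rw [one_div, ENNReal.le_rpow_inv_iff hq, distortion_rpow μ hq.ne', ← hfst,
    lintegral_map (by fun_prop) measurable_fst]
  refine lintegral_mono_ae (hsupp.mono fun z hz => ?_)
  gcongr
  exact hQ _ _ hz

theorem exists_isQuantizer_of_quantErr_lt (hq : 0 < q) {m : ℕ} {t : ℝ≥0∞}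
    (h : quantErr q m μ < t) :
    ∃ Q : SimpleFunc E E, IsQuantizer Q ∧ Q.range.card ≤ m ∧ distortion q μ Q ≤ t := by
  simp only [quantErr, Wp, iInf_lt_iff] at h
  obtain ⟨ν, ⟨hν, S, hcard, hsupp⟩, γ, ⟨hfst, hsnd⟩, hcost⟩ := h
  have hS : S.Nonempty := by
    rw [Finset.nonempty_iff_ne_empty]
    rintro rfl
    simp at hsupp
  obtain ⟨Q, hQ⟩ := exists_simpleFunc_mem_edist_le hS
  refine ⟨Q, fun x y => (hQ x).2 _ (hQ y).1, (Finset.card_le_card fun s hs => ?_).trans hcard,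
    (distortion_le_of_map_eq hq (fun x => (hQ x).2) hfst (hsnd ▸ hsupp)).trans hcost.le⟩
  obtain ⟨x, rfl⟩ := SimpleFunc.mem_range.1 hs
  exact (hQ x).1

theorem distortion_const_lt_top (hq : 1 ≤ q) [IsProbabilityMeasure μ] {m : ℕ}
    (h : quantErr q m μ < ∞) (x₀ : E) : distortion q μ (SimpleFunc.const E x₀) < ∞ := by
  obtain ⟨t, ht, ht_top⟩ := exists_between h
  obtain ⟨Q, -, -, hQ⟩ := exists_isQuantizer_of_quantErr_lt (by linarith) ht
  have hQ_meas := Q.measurable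
  calc distortion q μ (SimpleFunc.const E x₀)
      ≤ eLpNorm' ((fun x => edist x (Q x)) + fun _ => ∑ s ∈ Q.range, edist s x₀) q μ := by
        refine eLpNorm'_mono_enorm_ae (by linarith) (ae_of_all _ fun x => ?_)
        simp only [enorm_eq_self, Pi.add_apply, SimpleFunc.const_apply]
        refine (edist_triangle x (Q x) x₀).trans ?_
        gcongr
        exact Finset.single_le_sum (f := (edist · x₀)) (fun _ _ => zero_le)
          (Q.mem_range_self x)
    _ ≤ distortion q μ Q + eLpNorm' (fun _ => ∑ s ∈ Q.range, edist s x₀) q μ :=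
        eLpNorm'_add_le (Measurable.aestronglyMeasurable (by fun_prop))
          aestronglyMeasurable_const hq
    _ < ∞ := by
        rw [eLpNorm'_const_of_isProbabilityMeasure _ (by linarith), enorm_eq_self]
        exact ENNReal.add_lt_top.2 ⟨hQ.trans_lt ht_top, ENNReal.sum_lt_top.2 fun s _ =>
          edist_lt_top s x₀⟩

theorem distortion_comp_le (hq : 1 ≤ q) {Q : SimpleFunc E E} (hQ : IsQuantizer Q)
    (π : SimpleFunc E E) :
    distortion q μ (Q.comp π π.measurable) ≤ 2 * distortion q μ π + distortion q μ Q := by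
  have hQ_meas := Q.measurable
  have hπ := π.measurable
  have hbound (x : E) : edist x (Q (π x)) ≤ 2 * edist x (π x) + edist x (Q x) :=
    calc edist x (Q (π x))
        ≤ edist x (π x) + edist (π x) (Q x) :=
          (edist_triangle _ _ _).trans (by gcongr; exact hQ _ _)
      _ ≤ edist x (π x) + (edist (π x) x + edist x (Q x)) := by
          gcongr
          exact edist_triangle _ _ _
      _ = 2 * edist x (π x) + edist x (Q x) := by rw [edist_comm (π x) x]; ring
  calc distortion q μ (Q.comp π π.measurable)
      ≤ eLpNorm' ((fun x => edist x (π x)) + ((fun x => edist x (π x)) + fun x => edist x (Q x)))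
          q μ := eLpNorm'_mono_enorm_ae (by linarith) (ae_of_all _ fun x => by
        simpa [two_mul, add_assoc] using hbound x)
    _ ≤ distortion q μ π + (distortion q μ π + distortion q μ Q) := by
        refine (eLpNorm'_add_le (Measurable.aestronglyMeasurable (by fun_prop))
          (Measurable.aestronglyMeasurable (by fun_prop)) hq).trans ?_
        gcongr
        · exact le_rfl
        · exact eLpNorm'_add_le (Measurable.aestronglyMeasurable (by fun_prop))
            (Measurable.aestronglyMeasurable (by fun_prop)) hq
    _ = 2 * distortion q μ π + distortion q μ Q := by ring

theorem distortion_composeQuantizers_le (hq : 1 ≤ q) {Q : ℕ → SimpleFunc E E}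
    (hQ : ∀ i, IsQuantizer (Q i)) {a : ℝ≥0∞} {i : ℕ}
    (hdist : ∀ j ≤ i, distortion q μ (Q j) ≤ 4 ^ j * a) :
    distortion q μ (composeQuantizers Q i) ≤ 2 * (4 ^ i * a) := by
  induction i with
  | zero => exact (hdist 0 le_rfl).trans (le_mul_of_one_le_left' one_le_two)
  | succ i ih =>
    calc distortion q μ (composeQuantizers Q (i + 1))
        ≤ 2 * distortion q μ (composeQuantizers Q i) + distortion q μ (Q (i + 1)) :=
          distortion_comp_le hq (hQ (i + 1)) _
      _ ≤ 2 * (2 * (4 ^ i * a)) + 4 ^ (i + 1) * a := by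
          gcongr
          exacts [ih fun j hj => hdist j (hj.trans i.le_succ), hdist (i + 1) le_rfl]
      _ = 2 * (4 ^ (i + 1) * a) := by ring

theorem expWpPow_le_of_quantErr_lt [IsProbabilityMeasure μ] {p : ℝ} (hp : 1 ≤ p) (hpq : p < q)
    (hq : q ≤ 2 * p) {n : ℕ} (hn : n ≠ 0) {m : ℕ → ℕ} {a : ℝ≥0∞} {I : ℕ}
    (hquant : ∀ i ≤ I, quantErr q (m i) μ < 4 ^ i * a) (x₀ : E) :
    expWpPow p μ n ≤ 4 * a
      + ∑ i ∈ Finset.range I, 4 * (2 * (4 ^ (i + 1) * a)) * (m i / n) ^ (1 / p - 1 / q)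
      + 4 * distortion q μ (SimpleFunc.const E x₀) * (m I / n) ^ (1 / p - 1 / q) := by
  have hq1 : 1 ≤ q := by linarith
  have hσ : 0 ≤ 1 / p - 1 / q := sub_nonneg.2 (one_div_le_one_div_of_le (by linarith) hpq.le)
  have hexists (i : ℕ) : ∃ Q : SimpleFunc E E, IsQuantizer Q ∧
      (i ≤ I → Q.range.card ≤ m i ∧ distortion q μ Q ≤ 4 ^ i * a) ∧
      (I < i → Q = SimpleFunc.const E x₀) := by
    obtain hi | hi := le_or_gt i I
    · obtain ⟨Q, hQ, hbounds⟩ := exists_isQuantizer_of_quantErr_lt (by linarith) (hquant i hi)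
      exact ⟨Q, hQ, fun _ => hbounds, fun hi' => absurd hi hi'.not_ge⟩
    · exact ⟨SimpleFunc.const E x₀, fun _ _ => le_rfl, fun hi' => absurd hi hi'.not_gt,
        fun _ => rfl⟩
  choose Q hQ hbounds hconst using hexists
  have hlast : composeQuantizers Q (I + 1) = SimpleFunc.const E x₀ := by
    ext x
    simp [composeQuantizers, hconst (I + 1) I.lt_succ_self]
  have hdist {i : ℕ} (hi : i ≤ I) : distortion q μ (composeQuantizers Q i) ≤ 2 * (4 ^ i * a) :=
    distortion_composeQuantizers_le hq1 hQ fun j hj => (hbounds j (hj.trans hi)).2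
  have hcard {i : ℕ} (hi : i ≤ I) : (composeQuantizers Q i).range.card ≤ m i :=
    (card_range_composeQuantizers_le Q i).trans (hbounds i hi).1
  refine (expWpPow_le_sum hp hpq hq hn (factorsThrough_composeQuantizers Q) hlast).trans ?_
  rw [Finset.sum_range_succ, hlast, ← add_assoc,
    show 4 * a = 2 * (2 * (4 ^ 0 * a)) by rw [pow_zero, one_mul, ← mul_assoc]; norm_num]
  gcongr with i hi
  · exact hdist I.zero_le
  · exact hdist (Finset.mem_range.1 hi)
  · exact hcard (Finset.mem_range.1 hi).le
  · exact hcard le_rfl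

end Quantizers

section Scales

theorem natCast_rpow_le_four_pow_mul_ceil_rpow {b β : ℝ} (hb : 0 < b) (hβ : 0 ≤ β)
    (hbβ : b ^ β ≤ 4) (n i : ℕ) : (n : ℝ) ^ β ≤ 4 ^ i * (⌈n / b ^ i⌉₊ : ℝ) ^ β :=
  calc (n : ℝ) ^ β ≤ (b ^ i * ⌈n / b ^ i⌉₊) ^ β := by
        gcongr
        rw [← div_le_iff₀' (by positivity)]
        exact Nat.le_ceil _
    _ = (b ^ β) ^ i * (⌈n / b ^ i⌉₊ : ℝ) ^ β := by
        rw [Real.mul_rpow (by positivity) (by positivity), ← Real.rpow_pow_comm hb.le]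
    _ ≤ 4 ^ i * (⌈n / b ^ i⌉₊ : ℝ) ^ β := by gcongr

theorem ofReal_natCast_rpow_ne_zero {n : ℕ} (hn : n ≠ 0) (β : ℝ) :
    ENNReal.ofReal ((n : ℝ) ^ β) ≠ 0 :=
  (ENNReal.ofReal_pos.2 (by positivity)).ne'

theorem ceil_div_pow_div_natCast_rpow_le {b σ : ℝ} (hb : 0 < b) (hσ0 : 0 ≤ σ) (hσ1 : σ ≤ 1)
    {n i : ℕ} (hi : b ^ i ≤ n) :
    ((⌈n / b ^ i⌉₊ : ℝ≥0∞) / n) ^ σ ≤ 2 * ENNReal.ofReal (b ^ σ)⁻¹ ^ i := by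
  have hn : (0 : ℝ) < n := (pow_pos hb i).trans_le hi
  have hratio : (⌈n / b ^ i⌉₊ : ℝ) / n ≤ 2 * (b ^ i)⁻¹ := by
    have hceil : (⌈n / b ^ i⌉₊ : ℝ) < 2 * (n / b ^ i) :=
      Nat.ceil_lt_two_mul (by rw [lt_div_iff₀ (by positivity)]; linarith)
    rw [div_le_iff₀ hn]
    exact hceil.le.trans_eq (by ring)
  have hreal : ((⌈n / b ^ i⌉₊ : ℝ) / n) ^ σ ≤ 2 * (b ^ σ)⁻¹ ^ i :=
    calc ((⌈n / b ^ i⌉₊ : ℝ) / n) ^ σ ≤ (2 * (b ^ i)⁻¹) ^ σ := by gcongr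
      _ = 2 ^ σ * (b ^ σ)⁻¹ ^ i := by
          rw [Real.mul_rpow (by norm_num) (by positivity), Real.inv_rpow (by positivity),
            ← Real.rpow_pow_comm hb.le, inv_pow]
      _ ≤ 2 * (b ^ σ)⁻¹ ^ i := by
          gcongr
          exact (Real.rpow_le_rpow_of_exponent_le one_le_two hσ1).trans_eq (Real.rpow_one 2)
  calc ((⌈n / b ^ i⌉₊ : ℝ≥0∞) / n) ^ σ = ENNReal.ofReal (((⌈n / b ^ i⌉₊ : ℝ) / n) ^ σ) := by
        rw [← ENNReal.ofReal_rpow_of_nonneg (by positivity) hσ0, ENNReal.ofReal_div_of_pos hn,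
          ENNReal.ofReal_natCast, ENNReal.ofReal_natCast]
    _ ≤ ENNReal.ofReal (2 * (b ^ σ)⁻¹ ^ i) := ENNReal.ofReal_le_ofReal hreal
    _ = 2 * ENNReal.ofReal (b ^ σ)⁻¹ ^ i := by
        rw [ENNReal.ofReal_mul zero_le_two, ENNReal.ofReal_pow (by positivity),
          ENNReal.ofReal_ofNat]

theorem sum_four_pow_mul_ceil_rpow_le {b σ : ℝ} (hb : 1 ≤ b) (hσ0 : 0 ≤ σ) (hσ1 : σ ≤ 1)
    (hbσ : 4 < b ^ σ) {n I : ℕ} (hI : b ^ I ≤ n) (a : ℝ≥0∞) :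
    ∑ i ∈ Finset.range I, 4 * (2 * (4 ^ (i + 1) * a)) * ((⌈n / b ^ i⌉₊ : ℝ≥0∞) / n) ^ σ
      ≤ ENNReal.ofReal (64 / (1 - 4 / b ^ σ)) * a := by
  have hθ : 4 / b ^ σ < 1 := (div_lt_one (by linarith)).2 hbσ
  calc ∑ i ∈ Finset.range I, 4 * (2 * (4 ^ (i + 1) * a)) * ((⌈n / b ^ i⌉₊ : ℝ≥0∞) / n) ^ σ
      ≤ ∑ i ∈ Finset.range I, 64 * a * ENNReal.ofReal (4 / b ^ σ) ^ i := by
        refine Finset.sum_le_sum fun i hi => ?_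
        have hi : b ^ i ≤ n :=
          (pow_le_pow_right₀ hb (Finset.mem_range.1 hi).le).trans hI
        calc 4 * (2 * (4 ^ (i + 1) * a)) * ((⌈n / b ^ i⌉₊ : ℝ≥0∞) / n) ^ σ
            ≤ 4 * (2 * (4 ^ (i + 1) * a)) * (2 * ENNReal.ofReal (b ^ σ)⁻¹ ^ i) := by
              gcongr
              exact ceil_div_pow_div_natCast_rpow_le (by linarith) hσ0 hσ1 hi
          _ = 64 * a * ENNReal.ofReal (4 / b ^ σ) ^ i := by
              rw [div_eq_mul_inv, ENNReal.ofReal_mul (by norm_num), ENNReal.ofReal_ofNat]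
              ring
    _ ≤ 64 * a * (1 - ENNReal.ofReal (4 / b ^ σ))⁻¹ := by
        rw [← Finset.mul_sum, ← ENNReal.tsum_geometric]
        gcongr
        exact ENNReal.sum_le_tsum _
    _ = ENNReal.ofReal (64 / (1 - 4 / b ^ σ)) * a := by
        rw [← ENNReal.ofReal_one, ← ENNReal.ofReal_sub _ (by positivity),
          ← ENNReal.ofReal_inv_of_pos (by linarith), div_eq_mul_inv 64,
          ENNReal.ofReal_mul (by norm_num), ENNReal.ofReal_ofNat]
        ring

theorem inv_rpow_pow_le_of_inv_pow_le {b σ c x : ℝ} (hb : 0 ≤ b) (hσ : 0 ≤ σ) (hc : 0 ≤ c)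
    (hx : 0 ≤ x) {I : ℕ} (h : (b ^ I)⁻¹ ≤ c / x) : (b ^ σ)⁻¹ ^ I ≤ c ^ σ * x ^ (-σ) :=
  calc (b ^ σ)⁻¹ ^ I = ((b ^ I)⁻¹) ^ σ := by
        rw [inv_pow, Real.rpow_pow_comm hb, Real.inv_rpow (by positivity)]
    _ ≤ (c / x) ^ σ := by gcongr
    _ = c ^ σ * x ^ (-σ) := by rw [Real.div_rpow hc hx, Real.rpow_neg hx, div_eq_mul_inv]

theorem four_mul_le_four_rpow {r : ℝ} (hr : 1 ≤ r) : 4 * r ≤ 4 ^ r := by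
  have hlog : 1 ≤ Real.log 4 := by
    rw [Real.le_log_iff_exp_le (by norm_num)]
    linarith [Real.exp_one_lt_three]
  calc 4 * r ≤ 4 * (Real.log 4 * (r - 1) + 1) := by nlinarith
    _ ≤ 4 * Real.exp (Real.log 4 * (r - 1)) := by gcongr; exact Real.add_one_le_exp _
    _ = 4 ^ r := by
        rw [← Real.rpow_def_of_pos (by norm_num), ← Real.rpow_one_add' (by norm_num) (by linarith),
          add_sub_cancel]

theorem exists_four_lt_rpow {β σ : ℝ} (hβ : 0 ≤ β) (hβσ : β < σ) :
    ∃ b : ℝ, 1 < b ∧ b ^ β ≤ 4 ∧ 4 < b ^ σ ∧ 4 + 64 / (1 - 4 / b ^ σ) ≤ 132 * σ / (σ - β) := by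
  obtain ⟨γ, hγ⟩ : ∃ γ, γ = (β + σ) / 2 := ⟨_, rfl⟩
  have hσ : 0 < σ := by linarith
  have hγ0 : 0 < γ := by linarith
  have hγσ : γ < σ := by linarith
  have hratio : 4 * (σ / γ) ≤ ((4 : ℝ) ^ γ⁻¹) ^ σ := by
    rw [← Real.rpow_mul (by norm_num), inv_mul_eq_div]
    exact four_mul_le_four_rpow ((one_le_div hγ0).2 hγσ.le)
  refine ⟨4 ^ γ⁻¹, Real.one_lt_rpow (by norm_num) (by positivity), ?_, ?_, ?_⟩
  · rw [← Real.rpow_mul (by norm_num)]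
    exact (Real.rpow_le_rpow_of_exponent_le (by norm_num)
      ((inv_mul_le_one₀ hγ0).2 (by linarith))).trans_eq (Real.rpow_one 4)
  · linarith [(one_lt_div hγ0).2 hγσ]
  · calc 4 + 64 / (1 - 4 / ((4 : ℝ) ^ γ⁻¹) ^ σ)
        ≤ 4 + 64 / (1 - 4 / (4 * (σ / γ))) := by
          gcongr
          rw [sub_pos, div_lt_one (by positivity)]
          linarith [(one_lt_div hγ0).2 hγσ]
      _ = 4 + 128 * σ / (σ - β) := by
          have : σ - γ ≠ 0 := by linarith
          have : σ - β ≠ 0 := by linarith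
          field_simp
          rw [hγ]
          ring
      _ ≤ 4 * (σ / (σ - β)) + 128 * σ / (σ - β) := by
          gcongr
          linarith [(one_le_div (sub_pos.2 hβσ)).2 (by linarith : σ - β ≤ σ)]
      _ = 132 * σ / (σ - β) := by ring

end Scales

section Rates

variable {E : Type*} [MeasurableSpace E] [MetricSpace E] {p q β b : ℝ} {μ : Measure E}

theorem quantErr_ceil_lt (hβ : 0 ≤ β) (hb : 0 < b) (hbβ : b ^ β ≤ 4) {n i : ℕ} (hn : n ≠ 0)
    {Λ : ℝ≥0∞} (h : ENNReal.ofReal ((⌈n / b ^ i⌉₊ : ℝ) ^ β) * quantErr q ⌈n / b ^ i⌉₊ μ < Λ) :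
    quantErr q ⌈n / b ^ i⌉₊ μ < 4 ^ i * (Λ / ENNReal.ofReal ((n : ℝ) ^ β)) := by
  have hscale : ENNReal.ofReal ((n : ℝ) ^ β) ≤
      4 ^ i * ENNReal.ofReal ((⌈n / b ^ i⌉₊ : ℝ) ^ β) := by
    refine (ENNReal.ofReal_le_ofReal
      (natCast_rpow_le_four_pow_mul_ceil_rpow hb hβ hbβ n i)).trans_eq ?_
    rw [ENNReal.ofReal_mul (by positivity), ENNReal.ofReal_pow (by norm_num), ENNReal.ofReal_ofNat]
  rw [← mul_div_assoc,
    ENNReal.lt_div_iff_mul_lt (Or.inl (ofReal_natCast_rpow_ne_zero hn β)) (by simp)]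
  calc quantErr q ⌈n / b ^ i⌉₊ μ * ENNReal.ofReal ((n : ℝ) ^ β)
      ≤ 4 ^ i * (ENNReal.ofReal ((⌈n / b ^ i⌉₊ : ℝ) ^ β) * quantErr q ⌈n / b ^ i⌉₊ μ) := by
        rw [mul_comm, ← mul_assoc]
        gcongr
    _ < 4 ^ i * Λ := ENNReal.mul_lt_mul_right (by simp) (by simp) h

theorem exists_pow_scale (hb : 1 < b) {N n : ℕ} (hN : N ≠ 0) (hNn : N ≤ n) :
    ∃ I : ℕ, b ^ I ≤ n ∧ (∀ i ≤ I, N ≤ ⌈n / b ^ i⌉₊) ∧ (b ^ I)⁻¹ ≤ N * b / n := by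
  have hN0 : (0 : ℝ) < N := by positivity
  have hn0 : (0 : ℝ) < n := hN0.trans_le (by exact_mod_cast hNn)
  obtain ⟨I, hlower, hupper⟩ := exists_nat_pow_near
    ((one_le_div hN0).2 (by exact_mod_cast hNn : (N : ℝ) ≤ n)) hb
  rw [le_div_iff₀ hN0] at hlower
  rw [div_lt_iff₀ hN0] at hupper
  have hN1 : (1 : ℝ) ≤ N := by exact_mod_cast Nat.one_le_iff_ne_zero.2 hN
  refine ⟨I, (le_mul_of_one_le_right (by positivity) hN1).trans hlower, fun i hi => ?_, ?_⟩
  · have hscale : (N : ℝ) ≤ n / b ^ i := by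
      rw [le_div_iff₀' (by positivity)]
      exact (mul_le_mul_of_nonneg_right (pow_le_pow_right₀ hb.le hi) hN0.le).trans hlower
    exact_mod_cast hscale.trans (Nat.le_ceil _)
  · rw [inv_le_iff_one_le_mul₀ (by positivity), div_mul_eq_mul_div, one_le_div hn0]
    exact hupper.le.trans_eq (by ring)

variable [OpensMeasurableSpace E] [TopologicalSpace.SeparableSpace E] [IsProbabilityMeasure μ]

theorem ofReal_rpow_mul_expWpPow_le (hp : 1 ≤ p) (hpq : p < q) (hq : q ≤ 2 * p) (hβ : 0 ≤ β)
    (hb : 1 < b) (hbβ : b ^ β ≤ 4) {σ : ℝ} (hσ : σ = 1 / p - 1 / q) (hbσ : 4 < b ^ σ)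
    {Λ : ℝ≥0∞} {N n : ℕ} (hN : N ≠ 0)
    (hquant : ∀ k ≥ N, ENNReal.ofReal ((k : ℝ) ^ β) * quantErr q k μ < Λ)
    (hNn : N ≤ n) (x₀ : E) :
    ENNReal.ofReal ((n : ℝ) ^ β) * expWpPow p μ n ≤
      ENNReal.ofReal (4 + 64 / (1 - 4 / b ^ σ)) * Λ
        + 8 * distortion q μ (SimpleFunc.const E x₀) *
          ENNReal.ofReal ((N * b) ^ σ * (n : ℝ) ^ (β - σ)) := by
  have hn : n ≠ 0 := by lia
  have hb0 : 0 < b := by linarith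
  have hσ0 : 0 ≤ σ := hσ ▸ sub_nonneg.2 (one_div_le_one_div_of_le (by linarith) hpq.le)
  have hσ1 : σ ≤ 1 := by
    have : 1 / p ≤ 1 := (div_le_one (by linarith)).2 hp
    have : 0 < 1 / q := one_div_pos.2 (by linarith)
    linarith
  have hgap : 0 ≤ 64 / (1 - 4 / b ^ σ) :=
    div_nonneg (by norm_num) (sub_nonneg.2 ((div_le_one (by linarith)).2 hbσ.le))
  obtain ⟨I, hI, hscale, hlast⟩ := exists_pow_scale hb hN hNn
  obtain ⟨a, ha⟩ : ∃ a, a = Λ / ENNReal.ofReal ((n : ℝ) ^ β) := ⟨_, rfl⟩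
  have hna : ENNReal.ofReal ((n : ℝ) ^ β) * a = Λ :=
    ha ▸ ENNReal.mul_div_cancel (ofReal_natCast_rpow_ne_zero hn β) (by simp)
  have hbound := expWpPow_le_of_quantErr_lt hp hpq hq hn
    (fun i hi => ha ▸ quantErr_ceil_lt hβ hb0 hbβ hn (hquant _ (hscale i hi))) x₀
  rw [← hσ] at hbound
  calc ENNReal.ofReal ((n : ℝ) ^ β) * expWpPow p μ n
      ≤ ENNReal.ofReal ((n : ℝ) ^ β) * (4 * a + ENNReal.ofReal (64 / (1 - 4 / b ^ σ)) * a
          + 4 * distortion q μ (SimpleFunc.const E x₀) *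
            (2 * ENNReal.ofReal ((N * b) ^ σ * (n : ℝ) ^ (-σ)))) := by
        gcongr
        refine hbound.trans ?_
        gcongr
        · exact sum_four_pow_mul_ceil_rpow_le hb.le hσ0 hσ1 hbσ hI a
        · refine (ceil_div_pow_div_natCast_rpow_le hb0 hσ0 hσ1 hI).trans ?_
          rw [← ENNReal.ofReal_pow (by positivity)]
          gcongr
          exact inv_rpow_pow_le_of_inv_pow_le hb0.le hσ0 (by positivity) (by positivity) hlast
    _ = ENNReal.ofReal (4 + 64 / (1 - 4 / b ^ σ)) * (ENNReal.ofReal ((n : ℝ) ^ β) * a)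
          + 8 * distortion q μ (SimpleFunc.const E x₀) *
            (ENNReal.ofReal ((n : ℝ) ^ β) * ENNReal.ofReal ((N * b) ^ σ * (n : ℝ) ^ (-σ))) := by
        rw [ENNReal.ofReal_add (by norm_num) hgap, ENNReal.ofReal_ofNat]
        ring
    _ = ENNReal.ofReal (4 + 64 / (1 - 4 / b ^ σ)) * Λ
          + 8 * distortion q μ (SimpleFunc.const E x₀) *
            ENNReal.ofReal ((N * b) ^ σ * (n : ℝ) ^ (β - σ)) := by
        rw [hna, ← ENNReal.ofReal_mul (by positivity), mul_left_comm,
          ← Real.rpow_add (by positivity), ← sub_eq_add_neg]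

end Rates

section Limsup

variable {E : Type*} [MeasurableSpace E] [MetricSpace E] [OpensMeasurableSpace E]
  [TopologicalSpace.SeparableSpace E] {p q β : ℝ} (μ : Measure E) [IsProbabilityMeasure μ]

theorem limsup_rpow_mul_expWpPow_le_of_limsup_lt (hp : 1 ≤ p) (hpq : p < q) (hq : q ≤ 2 * p)
    (hβ0 : 0 ≤ β) {σ : ℝ} (hσ : σ = 1 / p - 1 / q) (hβσ : β < σ) {Λ : ℝ≥0∞}
    (hΛ : limsup (fun n : ℕ => ENNReal.ofReal ((n : ℝ) ^ β) * quantErr q n μ) atTop < Λ) :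
    limsup (fun n : ℕ => ENNReal.ofReal ((n : ℝ) ^ β) * expWpPow p μ n) atTop
      ≤ ENNReal.ofReal (132 * σ / (σ - β)) * Λ := by
  obtain ⟨b, hb, hbβ, hbσ, hconst⟩ := exists_four_lt_rpow hβ0 hβσ
  obtain ⟨N, hquant⟩ := eventually_atTop.1
    ((eventually_lt_of_limsup_lt hΛ).and (eventually_ne_atTop 0))
  have hN : N ≠ 0 := (hquant N le_rfl).2
  obtain ⟨x₀⟩ : Nonempty E := μ.nonempty_of_neZero
  have hmoment : distortion q μ (SimpleFunc.const E x₀) ≠ ∞ :=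
    (distortion_const_lt_top (by linarith) (ENNReal.lt_top_of_mul_ne_top_right
      (hquant N le_rfl).1.ne_top (ofReal_natCast_rpow_ne_zero hN β)) x₀).ne
  have hremainder : Tendsto (fun n : ℕ => ENNReal.ofReal (132 * σ / (σ - β)) * Λ
      + 8 * distortion q μ (SimpleFunc.const E x₀) *
        ENNReal.ofReal ((N * b) ^ σ * (n : ℝ) ^ (β - σ))) atTop
      (nhds (ENNReal.ofReal (132 * σ / (σ - β)) * Λ)) := by
    have hpow : Tendsto (fun n : ℕ => (n : ℝ) ^ (β - σ)) atTop (nhds 0) := by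
      simpa only [neg_sub, Function.comp_def] using
        (tendsto_rpow_neg_atTop (sub_pos.2 hβσ)).comp tendsto_natCast_atTop_atTop
    simpa using tendsto_const_nhds.add (ENNReal.Tendsto.const_mul
      (ENNReal.tendsto_ofReal (hpow.const_mul _)) (Or.inr (by finiteness)))
  rw [← hremainder.limsup_eq]
  refine limsup_le_limsup (eventually_atTop.2 ⟨N, fun n hn => ?_⟩)
  refine (ofReal_rpow_mul_expWpPow_le hp hpq hq hβ0 hb hbβ hσ hbσ hN
    (fun k hk => (hquant k hk).1) hn x₀).trans ?_
  dsimp only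
  gcongr

theorem stmt_8_general (hp : 1 ≤ p) (hpq : p < q) (hq : q ≤ 2 * p) (hβ0 : 0 ≤ β)
    (hβ : β < 1 / p - 1 / q) :
    limsup (fun n : ℕ => ENNReal.ofReal ((n : ℝ) ^ β) * expWpPow p μ n) atTop
      ≤ ENNReal.ofReal (132 * (1 / p - 1 / q) / (1 / p - 1 / q - β)) *
          limsup (fun n : ℕ => ENNReal.ofReal ((n : ℝ) ^ β) * quantErr q n μ) atTop := by
  have hC : 0 < 132 * (1 / p - 1 / q) / (1 / p - 1 / q - β) := by
    have := hβ0.trans_lt hβ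
    exact div_pos (by positivity) (sub_pos.2 hβ)
  rw [← ENNReal.div_le_iff' (by simpa using hC) (by simp)]
  refine le_of_forall_gt_imp_ge_of_dense fun Λ hΛ => ?_
  rw [ENNReal.div_le_iff' (by simpa using hC) (by simp)]
  exact limsup_rpow_mul_expWpPow_le_of_limsup_lt μ hp hpq hq hβ0 rfl hβ hΛ

end Limsup

section Parameters

variable {p β ε q : ℝ}

theorem one_div_sub_one_div_sub_eq (hp : 0 < p) (hε : 0 < ε) (hq : q = 1 / (1 / (p + ε) - β)) :
    1 / p - 1 / q - β = ε / (p * (p + ε)) := by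
  rw [hq, one_div_one_div]
  field_simp
  ring

theorem lt_and_le_two_mul_of_eq_one_div (hp : 0 < p) (hβ : 0 ≤ β) (hε0 : 0 < ε)
    (hε : ε < (p ^ 2 / 2) * (1 / (2 * p) - β)) (hq : q = 1 / (1 / (p + ε) - β)) :
    p < q ∧ q ≤ 2 * p := by
  have hgap := one_div_sub_one_div_sub_eq hp hε0 hq
  have hgap0 : 0 < ε / (p * (p + ε)) := by positivity
  have hgap_le : ε / (p * (p + ε)) ≤ 1 / (2 * p) - β := by
    rw [div_le_iff₀ (by positivity)]
    nlinarith
  have hhalf : 1 / p = 1 / (2 * p) + 1 / (2 * p) := by field_simp; norm_num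
  have hq_inv : 1 / (2 * p) ≤ 1 / q := by linarith
  have hq0 : 0 < q := one_div_pos.1 ((one_div_pos.2 (by positivity)).trans_le hq_inv)
  exact ⟨(one_div_lt_one_div hq0 hp).1 (by linarith),
    (one_div_le_one_div (by positivity) hq0).1 hq_inv⟩

theorem rate_constant_le (hp : 1 ≤ p) (hβ : 0 ≤ β) (hε0 : 0 < ε)
    (hε : ε < (p ^ 2 / 2) * (1 / (2 * p) - β)) (hq : q = 1 / (1 / (p + ε) - β)) :
    132 * (1 / p - 1 / q) / (1 / p - 1 / q - β) ≤ 100 * p ^ 2 / ((1 / (2 * p) - β) * ε) := by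
  have hp0 : 0 < p := by linarith
  obtain ⟨hpq, hq2⟩ := lt_and_le_two_mul_of_eq_one_div hp0 hβ hε0 hε hq
  have hhalf : 1 / p = 2 * (1 / (2 * p)) := by field_simp
  have hσ : 1 / p - 1 / q ≤ 1 / (2 * p) := by
    linarith [one_div_le_one_div_of_le (hp0.trans hpq) hq2]
  have hδ0 : 0 < 1 / (2 * p) - β := pos_of_mul_pos_right (hε0.trans hε) (by positivity)
  have hεp : ε < p / 4 :=
    calc ε < p ^ 2 / 2 * (1 / (2 * p)) := hε.trans_le (by gcongr; linarith)
      _ = p / 4 := by field_simp; norm_num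
  calc 132 * (1 / p - 1 / q) / (1 / p - 1 / q - β)
      ≤ 132 * (1 / (2 * p)) / (ε / (p * (p + ε))) := by
        rw [one_div_sub_one_div_sub_eq hp0 hε0 hq]
        gcongr
    _ = 66 * (p + ε) / ε := by field_simp; norm_num
    _ ≤ 200 * p ^ 3 / ε := by
        have hp3 : p ≤ p ^ 3 := le_self_pow₀ hp three_ne_zero
        exact div_le_div_of_nonneg_right (by linarith) hε0.le
    _ = 100 * p ^ 2 / (1 / (2 * p) * ε) := by field_simp; ring
    _ ≤ 100 * p ^ 2 / ((1 / (2 * p) - β) * ε) := by gcongr; linarith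

end Parameters


/-- **Corollary (main4beta).** Let `(E, d_E)` be a separable metric space, `p ≥ 1`
and `μ ∈ 𝒫_p(E)`. Let `0 ≤ β < 1/(2p)`, `0 < ε < (p²/2)(1/(2p) − β)` and
`q = 1/(1/(p+ε) − β)`. Then
`limsup n^β (𝔼[W_p(μ_n,μ)^p])^{1/p} ≤ (100p²/((1/(2p) − β)ε)) · limsup n^β e_{n,q}(μ)`. -/
theorem stmt_8 {E : Type*} [MetricSpace E] [TopologicalSpace.SeparableSpace E]
    [MeasurableSpace E] [BorelSpace E]
    (p : ℝ) (hp : 1 ≤ p)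
    (μ : Measure E) [IsProbabilityMeasure μ] (hμ : HasFiniteMoment p μ)
    (β ε q : ℝ) (hβ0 : 0 ≤ β) (hβ : β < 1 / (2 * p))
    (hε0 : 0 < ε) (hε : ε < (p ^ 2 / 2) * (1 / (2 * p) - β))
    (hqdef : q = 1 / (1 / (p + ε) - β)) :
    Filter.limsup (fun n : ℕ => ENNReal.ofReal ((n : ℝ) ^ β) * expWpPow p μ n)
        Filter.atTop
      ≤ ENNReal.ofReal (100 * p ^ 2 / ((1 / (2 * p) - β) * ε)) *
          Filter.limsup (fun n : ℕ => ENNReal.ofReal ((n : ℝ) ^ β) * quantErr q n μ)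
            Filter.atTop := by
  have hp0 : 0 < p := by linarith
  obtain ⟨hpq, hq⟩ := lt_and_le_two_mul_of_eq_one_div hp0 hβ0 hε0 hε hqdef
  have hgap : 0 < 1 / p - 1 / q - β := by
    rw [one_div_sub_one_div_sub_eq hp0 hε0 hqdef]
    positivity
  exact (stmt_8_general μ hp hpq hq hβ0 (sub_pos.1 hgap)).trans (mul_le_mul_left
    (ENNReal.ofReal_le_ofReal (rate_constant_le hp hβ0 hε0 hε hqdef)) _)
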